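/- Let k ≥ 100 be an integer and let G be a graph with density d = d(G) ≥ k². Then G contains at least one of the following: (i) a subgraph H with v(H) ≤ 12k³d and d(H) ≥ d/(24k⁵), or (ii) an m-bounded minor G' with d(G') ≥ m·(1 − 30/m)·d for some integer m with k/6 ≤ m ≤ k. -/

import Mathlib

open SimpleGraph

/-- Density of a graph: `e(G) / v(G)`. -/
noncomputable def SimpleGraph.density {V : Type*} (G : SimpleGraph V) : ℝ :=
  (Nat.card G.edgeSet : ℝ) / (Nat.card V : ℝ)

/-- Density of a subgraph: its number of edges divided by its number of vertices. -/
noncomputable def SimpleGraph.Subgraph.density {V : Type*} {G : SimpleGraph V}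
    (H : G.Subgraph) : ℝ :=
  (Nat.card H.edgeSet : ℝ) / (Nat.card H.verts : ℝ)

/-- A model of `H` in `G`: pairwise disjoint branch sets, each inducing a connected
subgraph of `G`, with an edge of `G` between branch sets of adjacent vertices of `H`. -/
def SimpleGraph.IsMinorModel {V : Type*} {W : Type*} (G : SimpleGraph V) (H : SimpleGraph W)
    (X : W → Set V) : Prop :=
  (Pairwise fun i j => Disjoint (X i) (X j)) ∧
  (∀ i, (G.induce (X i)).Connected) ∧
  (∀ i j, H.Adj i j → ∃ u ∈ X i, ∃ v ∈ X j, G.Adj u v)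

/-- `G` has a `k`-bounded `H` minor if `G` contains a model of `H` all of whose branch sets
have at most `k` vertices. -/
def SimpleGraph.HasBoundedMinor {V : Type*} {W : Type*} (k : ℕ) (G : SimpleGraph V)
    (H : SimpleGraph W) : Prop :=
  ∃ X : W → Set V, G.IsMinorModel H X ∧ ∀ i, Nat.card (X i) ≤ k

namespace DSM
open scoped Classical
open Finset

set_option linter.unusedSectionVars false

noncomputable section

variable {V : Type} [Fintype V] (G : SimpleGraph V)

/-- number of neighbours of `v` in `W` -/
def dg (v : V) (W : Finset V) : ℕ := (W.filter (fun w => G.Adj v w)).card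

/-- number of ordered adjacent pairs -/
def ee (U W : Finset V) : ℕ := ∑ u ∈ U, dg G u W

lemma dg_mono {v : V} {W W' : Finset V} (h : W ⊆ W') : dg G v W ≤ dg G v W' :=
  card_le_card (filter_subset_filter _ h)

lemma dg_union_le (v : V) (W W' : Finset V) : dg G v (W ∪ W') ≤ dg G v W + dg G v W' := by
  unfold dg; rw [filter_union]; exact card_union_le _ _

lemma dg_union (v : V) {W W' : Finset V} (h : Disjoint W W') :
    dg G v (W ∪ W') = dg G v W + dg G v W' := by
  unfold dg; rw [filter_union, card_union_of_disjoint]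
  exact disjoint_filter_filter h

lemma dg_le_card (v : V) (W : Finset V) : dg G v W ≤ W.card := card_filter_le _ _

lemma ee_comm (U W : Finset V) : ee G U W = ee G W U := by
  unfold ee dg
  simp only [card_filter]
  rw [sum_comm]
  simp only [G.adj_comm]

lemma ee_mono {U U' W W' : Finset V} (h : U ⊆ U') (h' : W ⊆ W') : ee G U W ≤ ee G U' W' := by
  unfold ee
  calc _ ≤ ∑ u ∈ U, dg G u W' := sum_le_sum fun u _ => dg_mono G h'
    _ ≤ _ := sum_le_sum_of_subset h

lemma ee_union_left {U U' : Finset V} (W : Finset V) (h : Disjoint U U') :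
    ee G (U ∪ U') W = ee G U W + ee G U' W := by
  unfold ee; rw [sum_union h]

lemma ee_union_right {U U' : Finset V} (W : Finset V) (h : Disjoint U U') :
    ee G W (U ∪ U') = ee G W U + ee G W U' := by
  rw [ee_comm, ee_union_left G W h, ee_comm, ee_comm G U']

lemma two_ee_le {U W : Finset V} (h : Disjoint U W) :
    2 * ee G U W ≤ ee G (U ∪ W) (U ∪ W) := by
  rw [ee_union_left G _ h, ee_union_right G _ h, ee_union_right G _ h, ee_comm G W U]
  omega

def fib (π : V → V) (c : V) : Finset V := univ.filter (fun v => π v = c)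

lemma mem_fib {π : V → V} {c v : V} : v ∈ fib π c ↔ π v = c := by simp [fib]

/-- ordered edges of the quotient graph -/
def Q (π : V → V) : Finset (V × V) :=
  univ.filter fun x => x.1 ≠ x.2 ∧ ∃ u v, π u = x.1 ∧ π v = x.2 ∧ G.Adj u v

lemma mem_Q {π : V → V} {A B : V} :
    (A, B) ∈ Q G π ↔ A ≠ B ∧ ∃ u v, π u = A ∧ π v = B ∧ G.Adj u v := by simp [Q]

lemma Q_symm {π : V → V} {A B : V} (h : (A, B) ∈ Q G π) : (B, A) ∈ Q G π := by
  rw [mem_Q] at h ⊢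
  obtain ⟨h, u, v, hu, hv, huv⟩ := h
  exact ⟨h.symm, v, u, hv, hu, huv.symm⟩

lemma Q_refine {π ρ : V → V} (f : V → V) (h : ∀ v, π v = f (ρ v)) :
    (Q G π).card ≤ (Q G ρ).card := by
  calc (Q G π).card ≤ ((Q G ρ).image (fun x => (f x.1, f x.2))).card := by
        apply card_le_card
        rintro ⟨A, B⟩ hx
        rw [mem_Q] at hx
        obtain ⟨hne, u, v, hu, hv, huv⟩ := hx
        rw [mem_image]
        refine ⟨(ρ u, ρ v), ?_, ?_⟩
        · rw [mem_Q]
          refine ⟨?_, u, v, rfl, rfl, huv⟩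
          intro he
          apply hne
          rw [← hu, ← hv, h, h, he]
        · simp [← hu, ← hv, h]
    _ ≤ _ := card_image_le

/-- labels adjacent to both `l` and `c` -/
def Com (π : V → V) (l c : V) : Finset V :=
  univ.filter fun Z => Z ≠ l ∧ Z ≠ c ∧ (l, Z) ∈ Q G π ∧ (c, Z) ∈ Q G π

lemma Q_merge {π : V → V} {l c : V} (hll : π l = l) (hl : ∀ u, π u = l → u = l) (hlc : l ≠ c) :
    (Q G π).card ≤ (Q G (Function.update π l c)).card + 2 * ((Com G π l c).card + 1) := by
  set Bad : Finset (V × V) := (insert c (Com G π l c)).image (fun Z => (l, Z)) ∪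
    (insert c (Com G π l c)).image (fun Z => (Z, l)) with hBad
  have hb : Bad.card ≤ 2 * ((Com G π l c).card + 1) := by
    calc Bad.card ≤ _ := card_union_le _ _
      _ ≤ (insert c (Com G π l c)).card + (insert c (Com G π l c)).card :=
        add_le_add card_image_le card_image_le
      _ ≤ _ := by have := card_insert_le c (Com G π l c); omega
  have hB1 : ∀ Z, (l, Z) ∈ Q G π → (c, Z) ∈ Q G π → (l, Z) ∈ Bad := by
    intro Z h1 h2
    have hZl : Z ≠ l := fun h => ((mem_Q G).1 h1).1 h.symm
    have hZc : Z ≠ c := fun h => ((mem_Q G).1 h2).1 h.symm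
    simp only [hBad, mem_union, mem_image]
    left
    exact ⟨Z, mem_insert_of_mem (by simp [Com, hZl, hZc, h1, h2]), rfl⟩
  have hB2 : ∀ Z, (Z, l) ∈ Q G π → (Z, c) ∈ Q G π → (Z, l) ∈ Bad := by
    intro Z h1 h2
    have h1 := Q_symm G h1
    have h2 := Q_symm G h2
    have hZl : Z ≠ l := fun h => ((mem_Q G).1 h1).1 h.symm
    have hZc : Z ≠ c := fun h => ((mem_Q G).1 h2).1 h.symm
    simp only [hBad, mem_union, mem_image]
    right
    exact ⟨Z, mem_insert_of_mem (by simp [Com, hZl, hZc, h1, h2]), rfl⟩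
  have hB3 : (l, c) ∈ Bad := by simp [hBad]
  have hB4 : (c, l) ∈ Bad := by simp [hBad]
  have key : (Q G π \ Bad).card ≤ (Q G (Function.update π l c)).card := by
    apply card_le_card_of_injOn (fun x => (if x.1 = l then c else x.1, if x.2 = l then c else x.2))
    · rintro ⟨A, B⟩ hx
      simp only [coe_sdiff, Set.mem_sdiff, mem_coe] at hx
      obtain ⟨hx, hnb⟩ := hx
      have hx' := hx
      rw [mem_Q] at hx
      obtain ⟨hne, u, v, hu, hv, huv⟩ := hx
      rw [mem_coe, mem_Q]
      constructor
      · intro he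
        by_cases hA : A = l <;> by_cases hB' : B = l
        · exact hne (hA.trans hB'.symm)
        · simp [hA, hB'] at he; subst hA; subst he; exact hnb hB3
        · simp [hA, hB'] at he; subst hB'; subst he; exact hnb hB4
        · simp [hA, hB'] at he; exact hne he
      · have hup : ∀ w, Function.update π l c w = if π w = l then c else π w := by
          intro w
          by_cases hw : w = l
          · subst hw
            simp [hll]
          · rw [Function.update_of_ne hw, if_neg (fun h => hw (hl w h))]
        exact ⟨u, v, by rw [hup, hu], by rw [hup, hv], huv⟩
    · rintro ⟨A, B⟩ hx ⟨A', B'⟩ hx' he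
      simp only [coe_sdiff, Set.mem_sdiff, mem_coe] at hx hx'
      obtain ⟨hx, hnb⟩ := hx
      obtain ⟨hx', hnb'⟩ := hx'
      have n1 := ((mem_Q G).1 hx).1
      have n2 := ((mem_Q G).1 hx').1
      simp only [Prod.mk.injEq] at he
      obtain ⟨e1, e2⟩ := he
      grind
  have := card_sdiff_add_card (Q G π) Bad
  have h3 := le_card_sdiff Bad (Q G π)
  omega

end
end DSM
namespace DSM
open scoped Classical
open Finset
set_option linter.unusedSectionVars false
set_option linter.unusedVariables false
set_option linter.unusedSimpArgs false

noncomputable section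

variable {V : Type} [Fintype V] (G : SimpleGraph V)

def Valid (k : ℕ) (Big : V → Prop) (π : V → V) : Prop :=
  ∀ v, π (π v) = π v ∧ ((fib π (π v)).card = 1 ∨ (fib π (π v)).card = k) ∧
    (v = π v ∨ G.Adj v (π v) ∨ (Big v ∧ ∃ w, π w = π v ∧ G.Adj w (π v) ∧ G.Adj w v))

def Cov (k : ℕ) (π : V → V) : Finset V := univ.filter fun v => (fib π (π v)).card = k

def Cen (k : ℕ) (π : V → V) : Finset V := univ.filter fun c => (fib π c).card = k

lemma mem_Cov {k : ℕ} {π : V → V} {v : V} : v ∈ Cov k π ↔ (fib π (π v)).card = k := by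
  simp [Cov]

lemma mem_Cen {k : ℕ} {π : V → V} {v : V} : v ∈ Cen k π ↔ (fib π v).card = k := by
  simp [Cen]

lemma card_Cov (k : ℕ) (π : V → V) : (Cov k π).card = k * (Cen k π).card := by
  have h : ∀ v ∈ Cov k π, π v ∈ Cen k π := fun v hv => by
    rw [mem_Cen]; exact mem_Cov.1 hv
  rw [card_eq_sum_card_fiberwise h]
  rw [sum_const_nat (m := k)]
  · rw [mul_comm]
  · intro c hc
    rw [mem_Cen] at hc
    rw [← hc]
    congr 1
    ext v
    simp only [mem_filter, mem_fib, mem_Cov]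
    constructor
    · exact fun h => h.2
    · intro h; exact ⟨by rw [h, hc], h⟩

variable {G}
variable {k : ℕ} {Big : V → Prop} {π : V → V}

lemma Valid.idem (h : Valid G k Big π) (v : V) : π (π v) = π v := (h v).1

lemma Valid.cen_self (h : Valid G k Big π) (hk : 2 ≤ k) {c : V} (hc : c ∈ Cen k π) : π c = c := by
  rw [mem_Cen] at hc
  have : (fib π c).Nonempty := by rw [← card_pos]; omega
  obtain ⟨v, hv⟩ := this
  rw [mem_fib] at hv
  rw [← hv, h.idem]

lemma Valid.sing (h : Valid G k Big π) {v : V} (hv : v ∉ Cov k π) :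
    π v = v ∧ ∀ u, π u = v → u = v := by
  rw [mem_Cov] at hv
  have h1 : (fib π (π v)).card = 1 := (h v).2.1.resolve_right hv
  rw [card_eq_one] at h1
  obtain ⟨a, ha⟩ := h1
  have e1 : v = a := by
    have : v ∈ fib π (π v) := by rw [mem_fib]
    rw [ha] at this; simpa using this
  have e2 : π v = a := by
    have : π v ∈ fib π (π v) := by rw [mem_fib, h.idem]
    rw [ha] at this; simpa using this
  refine ⟨e2.trans e1.symm, ?_⟩
  intro u hu
  have : u ∈ fib π (π v) := by rw [mem_fib, hu, e2, e1]
  rw [ha] at this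
  rw [e1]; simpa using this

lemma Valid.sing_not_cen (h : Valid G k Big π) {v : V} (hv : v ∉ Cov k π) :
    v ∉ Cen k π := by
  rw [mem_Cen]
  have e := (h.sing hv).1
  rw [mem_Cov, e] at hv
  exact hv

lemma Cov_of_Cen (h : Valid G k Big π) (hk : 2 ≤ k) {c : V} (hc : c ∈ Cen k π) : c ∈ Cov k π := by
  rw [mem_Cov, h.cen_self hk hc]
  exact mem_Cen.1 hc

lemma valid_id (hk : 2 ≤ k) : Valid G k Big (id : V → V) := by
  intro v
  refine ⟨rfl, Or.inl ?_, Or.inl rfl⟩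
  have : fib (id : V → V) (id v) = {v} := by ext u; simp [mem_fib]
  rw [this]; simp

lemma cov_id (hk : 2 ≤ k) : Cov k (id : V → V) = ∅ := by
  ext v
  rw [mem_Cov]
  have : fib (id : V → V) (id v) = {v} := by ext u; simp [mem_fib]
  rw [this]; simp; omega

/-- star relabelling -/
def star (π : V → V) (x : V) (F : Finset V) : V → V := fun v => if v ∈ insert x F then x else π v

lemma fib_star_x (h : Valid G k Big π) {x : V} {F : Finset V}
    (hx : x ∉ Cov k π) : fib (star π x F) x = insert x F := by
  ext u
  rw [mem_fib, star]
  by_cases hu : u ∈ insert x F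
  · simp [hu]
  · simp only [hu, if_false, iff_false]
    intro h2
    exact hu (by rw [(h.sing hx).2 u h2]; simp)

lemma fib_star_o (h : Valid G k Big π) {x c : V} {F : Finset V}
    (hx : x ∉ Cov k π) (hF : ∀ l ∈ F, l ∉ Cov k π) (hc : c ∉ insert x F) :
    fib (star π x F) c = fib π c := by
  ext u
  rw [mem_fib, mem_fib, star]
  by_cases hu : u ∈ insert x F
  · simp only [hu, if_true]
    have : π u = u := by
      rw [mem_insert] at hu
      rcases hu with rfl | hu
      · exact (h.sing hx).1
      · exact (h.sing (hF u hu)).1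
    rw [this]
    constructor
    · rintro rfl; simp at hc
    · rintro rfl; exact absurd hu hc
  · simp [hu]

lemma fib_star_F {x c : V} {F : Finset V} (h : Valid G k Big π)
    (hF : ∀ l ∈ F, l ∉ Cov k π) (hc : c ∈ F) (hxF : x ∉ F) :
    fib (star π x F) c = ∅ := by
  ext u
  rw [mem_fib, star]
  by_cases hu : u ∈ insert x F
  · simp only [hu, if_true]
    simp; rintro rfl; exact hxF hc
  · simp only [hu, if_false]
    simp
    intro h2
    have := (h.sing (hF c hc)).2 u h2
    subst this
    exact hu (mem_insert_of_mem hc)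

lemma star_not_mem (h : Valid G k Big π) {x : V} {F : Finset V}
    (hx : x ∉ Cov k π) (hF : ∀ l ∈ F, l ∉ Cov k π) {v : V} (hv : v ∉ insert x F) :
    π v ∉ insert x F := by
  intro h2
  rw [mem_insert] at h2
  rcases h2 with h2 | h2
  · have := (h.sing hx).2 v h2
    exact hv (by simp [this])
  · have := (h.sing (hF _ h2)).2 v rfl
    rw [← this] at h2
    exact hv (by simp [h2])

lemma star_valid (h : Valid G k Big π) {x : V} {F : Finset V}
    (hx : x ∉ Cov k π) (hF : ∀ l ∈ F, l ∉ Cov k π) (hxF : x ∉ F) (hcard : F.card + 1 = k)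
    (hadj : ∀ l ∈ F, G.Adj x l) : Valid G k Big (star π x F) := by
  have hin : ∀ v, v ∈ insert x F → star π x F v = x := fun v hv => by simp only [star, hv, if_true]
  have hout : ∀ v, v ∉ insert x F → star π x F v = π v := fun v hv => by
    simp only [star, hv, if_false]
  intro v
  by_cases hv : v ∈ insert x F
  · rw [hin v hv]
    refine ⟨hin x (by simp), Or.inr ?_, ?_⟩
    · rw [fib_star_x h hx, card_insert_of_notMem hxF, hcard]
    · rw [mem_insert] at hv
      rcases hv with hv | hv
      · exact Or.inl hv
      · exact Or.inr (Or.inl (hadj v hv).symm)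
  · have hpv := star_not_mem h hx hF hv
    rw [hout v hv, hout _ hpv]
    refine ⟨h.idem v, ?_, ?_⟩
    · rw [fib_star_o h hx hF hpv]; exact (h v).2.1
    · rcases (h v).2.2 with h1 | h1 | ⟨hb, w, hw, h2, h3⟩
      · exact Or.inl h1
      · exact Or.inr (Or.inl h1)
      · refine Or.inr (Or.inr ⟨hb, w, ?_, h2, h3⟩)
        rw [hout, hw]
        intro hwin
        have : π w = w := by
          rw [mem_insert] at hwin
          rcases hwin with rfl | hu
          · exact (h.sing hx).1
          · exact (h.sing (hF w hu)).1
        rw [← hw, this] at hpv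
        exact hpv hwin

lemma star_Cov (hk : 2 ≤ k) (h : Valid G k Big π) {x : V} {F : Finset V}
    (hx : x ∉ Cov k π) (hF : ∀ l ∈ F, l ∉ Cov k π) (hxF : x ∉ F) (hcard : F.card + 1 = k) :
    Cov k (star π x F) = Cov k π ∪ insert x F := by
  ext v
  rw [mem_Cov, mem_union]
  by_cases hv : v ∈ insert x F
  · simp only [hv, or_true, iff_true]
    have : star π x F v = x := by simp only [star, hv, if_true]
    rw [this, fib_star_x h hx, card_insert_of_notMem hxF, hcard]
  · have : star π x F v = π v := by simp only [star, hv, if_false]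
    rw [this, fib_star_o h hx hF (star_not_mem h hx hF hv)]
    simp [hv, mem_Cov]

lemma star_Cen (hk : 2 ≤ k) (h : Valid G k Big π) {x : V} {F : Finset V}
    (hx : x ∉ Cov k π) (hF : ∀ l ∈ F, l ∉ Cov k π) (hxF : x ∉ F) (hcard : F.card + 1 = k) :
    (Cen k (star π x F)).card = (Cen k π).card + 1 := by
  have : Cen k (star π x F) = insert x (Cen k π) := by
    ext c
    rw [mem_insert]
    by_cases hc : c = x
    · subst hc
      simp only [true_or, iff_true]
      rw [mem_Cen, fib_star_x h hx, card_insert_of_notMem hxF, hcard]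
    · by_cases hcF : c ∈ F
      · have h1 := h.sing_not_cen (hF c hcF)
        simp only [hc, h1, or_self, iff_false]
        rw [mem_Cen, fib_star_F h hF hcF hxF]
        simp; omega
      · rw [mem_Cen, fib_star_o h hx hF (by simp [hc, hcF]), mem_Cen]
        simp [hc]
  rw [this, card_insert_of_notMem (h.sing_not_cen hx)]

/-- dissolve a block -/
def diss (π : V → V) (c : V) : V → V := fun v => if π v = c then v else π v

lemma fib_diss_in (h : Valid G k Big π) {c u : V} (hu : π u = c) :
    fib (diss π c) u = {u} := by
  ext v
  rw [mem_fib, diss, mem_singleton]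
  by_cases hv : π v = c
  · simp [hv]
  · simp only [hv, if_false]
    constructor
    · intro h2
      have := h.idem v
      rw [h2, hu] at this
      exact absurd (h2.trans this.symm) hv
    · rintro rfl; exact absurd hu hv

lemma fib_diss_out (h : Valid G k Big π) {c u : V} (hu : π u ≠ c) :
    fib (diss π c) u = fib π u := by
  ext v
  rw [mem_fib, mem_fib, diss]
  by_cases hv : π v = c
  · simp only [hv, if_true]
    constructor
    · rintro rfl; exact absurd hv hu
    · rintro rfl
      have := h.idem v
      rw [hv] at this
      exact absurd this hu
  · simp [hv]

lemma diss_valid (h : Valid G k Big π) (c : V) : Valid G k Big (diss π c) := by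
  intro v
  by_cases hv : π v = c
  · have e : diss π c v = v := by simp [diss, hv]
    rw [e, e]
    exact ⟨rfl, Or.inl (by rw [fib_diss_in h hv]; simp), Or.inl rfl⟩
  · have e : diss π c v = π v := by simp [diss, hv]
    have hpv : π (π v) ≠ c := by rw [h.idem]; exact hv
    have e2 : diss π c (π v) = π v := by simp [diss, hpv, h.idem]
    rw [e, e2]
    refine ⟨rfl, ?_, ?_⟩
    · rw [fib_diss_out h hpv]; exact (h v).2.1
    · rcases (h v).2.2 with h1 | h1 | ⟨hb, w, hw, h2, h3⟩
      · exact Or.inl h1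
      · exact Or.inr (Or.inl h1)
      · refine Or.inr (Or.inr ⟨hb, w, ?_, h2, h3⟩)
        rw [diss, if_neg (by rw [hw]; exact hv), hw]

lemma diss_Cov (hk : 2 ≤ k) (h : Valid G k Big π) (c : V) :
    Cov k (diss π c) = Cov k π \ fib π c := by
  ext v
  rw [mem_Cov, mem_sdiff, mem_fib, mem_Cov]
  by_cases hv : π v = c
  · have e : diss π c v = v := by simp [diss, hv]
    rw [e, fib_diss_in h hv]
    simp [hv]; omega
  · have e : diss π c v = π v := by simp [diss, hv]
    rw [e, fib_diss_out h (by rw [h.idem]; exact hv)]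
    simp [hv]

lemma diss_Cen (hk : 2 ≤ k) (h : Valid G k Big π) {c : V} (hc : c ∈ Cen k π) :
    (Cen k (diss π c)).card + 1 = (Cen k π).card := by
  have : Cen k (diss π c) = (Cen k π).erase c := by
    ext u
    rw [mem_erase, mem_Cen, mem_Cen]
    by_cases hu : π u = c
    · rw [fib_diss_in h hu]
      by_cases huc : u = c
      · simp [huc]; omega
      · have : (fib π u).card ≠ k := by
          intro h2
          have := h.cen_self hk (mem_Cen.2 h2)
          exact huc (this.symm.trans hu)
        simp [this]; omega
    · rw [fib_diss_out h hu]
      have : u ≠ c := by rintro rfl; exact hu (h.cen_self hk hc)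
      simp [this]
  rw [this, card_erase_add_one hc]

lemma diss_Q (h : Valid G k Big π) (c : V) : (Q G π).card ≤ (Q G (diss π c)).card := by
  apply Q_refine G π
  intro v
  by_cases hv : π v = c
  · simp [diss, hv]
  · simp [diss, hv, h.idem]

end
end DSM
namespace DSM
open scoped Classical
open Finset
set_option linter.unusedSectionVars false
set_option linter.unusedVariables false
set_option linter.unusedSimpArgs false

noncomputable section

variable {V : Type} [Fintype V] {G : SimpleGraph V}
variable {k : ℕ} {Big : V → Prop} {π : V → V}

/-- swap `y` out of its block for `a` -/
def sw (π : V → V) (a y : V) : V → V := Function.update (Function.update π y y) a (π y)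

lemma sw_a (a y : V) : sw π a y a = π y := by simp [sw]

lemma sw_y {a y : V} (h : y ≠ a) : sw π a y y = y := by simp [sw, h]

lemma sw_o {a y v : V} (h : v ≠ a) (h2 : v ≠ y) : sw π a y v = π v := by simp [sw, h, h2]

section
variable (h : Valid G k Big π) (hk : 2 ≤ k) {a y : V} (ha : a ∉ Cov k π) (hy : y ∈ Cov k π)
  (hyc : y ≠ π y)
include h hk ha hy hyc

lemma sw_aux : a ≠ y ∧ a ≠ π y ∧ (∀ v, π v ≠ y) ∧ (∀ v, π v = a → v = a) ∧ π a = a := by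
  have hc : π y ∈ Cov k π := by
    rw [mem_Cov, h.idem]; exact mem_Cov.1 hy
  refine ⟨?_, ?_, ?_, (h.sing ha).2, (h.sing ha).1⟩
  · rintro rfl; exact ha hy
  · intro e; rw [e] at ha; exact ha hc
  · intro v e
    have := h.idem v
    rw [e] at this; exact hyc this.symm

lemma fib_sw_c : (fib (sw π a y) (π y)).card = k := by
  obtain ⟨h1, h2, h3, h4, h5⟩ := sw_aux h hk ha hy hyc
  have : fib (sw π a y) (π y) = insert a ((fib π (π y)).erase y) := by
    ext v
    rw [mem_fib, mem_insert, mem_erase, mem_fib]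
    by_cases e1 : v = a
    · subst e1; simp [sw_a]
    · by_cases e2 : v = y
      · subst e2; simp [sw_y h1.symm, hyc, e1]
      · simp [sw_o e1 e2, e1, e2]
  rw [this, card_insert_of_notMem, card_erase_of_mem, mem_Cov.1 hy]
  · omega
  · rw [mem_fib]
  · simp [mem_fib, h5, h2]

lemma fib_sw_y : fib (sw π a y) y = {y} := by
  obtain ⟨h1, h2, h3, h4, h5⟩ := sw_aux h hk ha hy hyc
  ext v
  rw [mem_fib, mem_singleton]
  by_cases e1 : v = a
  · subst e1; simp [sw_a, h1]; exact hyc.symm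
  · by_cases e2 : v = y
    · subst e2; simp [sw_y h1.symm]
    · simp [sw_o e1 e2, e1, e2]; exact h3 v

lemma fib_sw_a : fib (sw π a y) a = ∅ := by
  obtain ⟨h1, h2, h3, h4, h5⟩ := sw_aux h hk ha hy hyc
  ext v
  rw [mem_fib]
  by_cases e1 : v = a
  · subst e1; simp [sw_a]; exact h2.symm
  · by_cases e2 : v = y
    · subst e2; simp [sw_y h1.symm, h1.symm]
    · simp [sw_o e1 e2, e1, e2]; exact fun e => e1 (h4 v e)

lemma fib_sw_o {u : V} (h6 : u ≠ a) (h7 : u ≠ y) (h8 : u ≠ π y) :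
    fib (sw π a y) u = fib π u := by
  obtain ⟨h1, h2, h3, h4, h5⟩ := sw_aux h hk ha hy hyc
  ext v
  rw [mem_fib, mem_fib]
  by_cases e1 : v = a
  · subst e1; simp [sw_a, h5, h6.symm, h8.symm]
  · by_cases e2 : v = y
    · subst e2; simp [sw_y h1.symm, h7.symm, h8.symm]
    · simp [sw_o e1 e2, e1, e2]

lemma sw_Cen : Cen k (sw π a y) = Cen k π := by
  obtain ⟨h1, h2, h3, h4, h5⟩ := sw_aux h hk ha hy hyc
  ext u
  by_cases e1 : u = a
  · subst e1
    simp [h.sing_not_cen ha, mem_Cen, fib_sw_a h hk ha hy hyc]; omega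
  · by_cases e2 : u = y
    · subst e2
      have : u ∉ Cen k π := fun h9 => h3 u (h.cen_self hk h9)
      simp [this]
      rw [mem_Cen, fib_sw_y h hk ha hy hyc]; simp; omega
    · by_cases e3 : u = π y
      · rw [mem_Cen, mem_Cen, e3, fib_sw_c h hk ha hy hyc, mem_Cov.1 hy]
      · rw [mem_Cen, mem_Cen, fib_sw_o h hk ha hy hyc e1 e2 e3]

lemma sw_Cov : Cov k (sw π a y) = insert a ((Cov k π).erase y) := by
  obtain ⟨h1, h2, h3, h4, h5⟩ := sw_aux h hk ha hy hyc
  ext u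
  rw [mem_insert, mem_erase, mem_Cov, mem_Cov]
  by_cases e1 : u = a
  · subst e1
    simp only [sw_a, fib_sw_c h hk ha hy hyc, true_or]
  · by_cases e2 : u = y
    · subst e2
      simp [sw_y h1.symm, fib_sw_y h hk ha hy hyc, e1]; omega
    · rw [sw_o e1 e2]
      simp only [e1, e2, false_or, ne_eq, not_false_eq_true, true_and]
      by_cases e3 : π u = π y
      · rw [e3, fib_sw_c h hk ha hy hyc, mem_Cov.1 hy]
      · rw [fib_sw_o h hk ha hy hyc (fun e => e1 (h4 u e)) (h3 u) e3]

lemma sw_valid (hB : G.Adj a (π y) ∨ (Big a ∧ ∃ w, w ≠ y ∧ π w = π y ∧ G.Adj w (π y) ∧ G.Adj w a))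
    (hpar : ∀ v, π v = π y → v = π y ∨ G.Adj v (π y) ∨
      (Big v ∧ ∃ w, w ≠ y ∧ π w = π y ∧ G.Adj w (π y) ∧ G.Adj w v)) :
    Valid G k Big (sw π a y) := by
  obtain ⟨h1, h2, h3, h4, h5⟩ := sw_aux h hk ha hy hyc
  have hcc : sw π a y (π y) = π y := by rw [sw_o h2.symm hyc.symm, h.idem]
  have hwa : ∀ w, π w = π y → w ≠ a := by rintro w e rfl; rw [h5] at e; exact h2 e
  intro v
  by_cases e1 : v = a
  · subst e1
    rw [sw_a, hcc]
    refine ⟨rfl, Or.inr (fib_sw_c h hk ha hy hyc), Or.inr ?_⟩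
    rcases hB with hB | ⟨hB, w, hw, hw2, hw3⟩
    · exact Or.inl hB
    · refine Or.inr ⟨hB, w, ?_, hw3⟩
      rw [sw_o (hwa w hw2) hw, hw2]
  · by_cases e2 : v = y
    · subst e2
      rw [sw_y h1.symm, sw_y h1.symm]
      exact ⟨rfl, Or.inl (by rw [fib_sw_y h hk ha hy hyc]; simp), Or.inl rfl⟩
    · rw [sw_o e1 e2]
      by_cases e3 : π v = π y
      · rw [e3, hcc]
        refine ⟨rfl, Or.inr (fib_sw_c h hk ha hy hyc), ?_⟩
        rcases hpar v e3 with hB | hB | ⟨hB, w, hw, hw2, hw3⟩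
        · exact Or.inl hB
        · exact Or.inr (Or.inl hB)
        · refine Or.inr (Or.inr ⟨hB, w, ?_, hw3⟩)
          rw [sw_o (hwa w hw2) hw, hw2]
      · have hva : π v ≠ a := fun e => e1 (h4 v e)
        rw [sw_o hva (h3 v), fib_sw_o h hk ha hy hyc hva (h3 v) e3]
        refine ⟨h.idem v, (h v).2.1, ?_⟩
        rcases (h v).2.2 with hB | hB | ⟨hB, w, hw2, hw3⟩
        · exact Or.inl hB
        · exact Or.inr (Or.inl hB)
        · refine Or.inr (Or.inr ⟨hB, w, ?_, hw3⟩)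
          have e4 : w ≠ a := by rintro rfl; rw [h5] at hw2; exact hva hw2.symm
          have e5 : w ≠ y := by rintro rfl; exact e3 hw2.symm
          rw [sw_o e4 e5, hw2]

/-- cost of a swap: `U` contains everything in the blocks met by neighbours of `a` -/
lemma sw_Q (U : Finset V) (hU : ∀ u w, G.Adj a w → π u = π w → u ∈ U) :
    (Q G π).card ≤ (Q G (sw π a y)).card + 2 * (ee G (fib π (π y)) U + 2) := by
  obtain ⟨h1, h2, h3, h4, h5⟩ := sw_aux h hk ha hy hyc
  set π1 := Function.update π y y with hπ1
  have q1 : (Q G π).card ≤ (Q G π1).card := by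
    apply Q_refine G (fun v => if v = y then π y else v)
    intro v
    by_cases e : v = y
    · subst e; simp [hπ1]
    · simp [hπ1, e, h3 v]
  have q2 := Q_merge (G := G) (π := π1) (l := a) (c := π y) (by simp [hπ1, h1, h5]) (by
    intro u hu
    by_cases e : u = y
    · subst e; simp [hπ1] at hu; exact absurd hu h1.symm
    · rw [hπ1, Function.update_of_ne e] at hu; exact h4 u hu) h2
  have q3 : (Com G π1 a (π y)).card ≤ ee G (fib π (π y)) U + 1 := by
    have hsub : Com G π1 a (π y) ⊆ insert y
        (((fib π (π y)).biUnion (fun w => U.filter (fun u => G.Adj w u))).image π) := by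
      intro Z hZ
      simp only [Com, mem_filter, mem_univ, true_and] at hZ
      obtain ⟨hZa, hZc, m1, m2⟩ := hZ
      rw [mem_Q] at m1 m2
      obtain ⟨_, u1, v1, hu1, hv1, ad1⟩ := m1
      obtain ⟨_, u2, v2, hu2, hv2, ad2⟩ := m2
      rw [mem_insert]
      by_cases hZy : Z = y
      · exact Or.inl hZy
      · right
        have o1 : ∀ v, π1 v = Z → π v = Z := by
          intro v hv
          by_cases e : v = y
          · subst e; simp [hπ1] at hv; exact absurd hv.symm hZy
          · rwa [hπ1, Function.update_of_ne e] at hv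
        have o2 : u1 = a := by
          by_cases e : u1 = y
          · subst e; simp [hπ1] at hu1; exact absurd hu1 h1.symm
          · rw [hπ1, Function.update_of_ne e] at hu1; exact h4 u1 hu1
        have o3 : π u2 = π y := by
          by_cases e : u2 = y
          · rw [e]
          · rwa [hπ1, Function.update_of_ne e] at hu2
        subst o2
        rw [mem_image]
        refine ⟨v2, ?_, o1 v2 hv2⟩
        rw [mem_biUnion]
        refine ⟨u2, mem_fib.2 o3, ?_⟩
        rw [mem_filter]
        exact ⟨hU v2 v1 ad1 ((o1 v2 hv2).trans (o1 v1 hv1).symm), ad2⟩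
    calc _ ≤ _ := card_le_card hsub
      _ ≤ _ := card_insert_le _ _
      _ ≤ _ := by
        gcongr
        refine card_image_le.trans ?_
        exact card_biUnion_le
  have : Function.update π1 a (π y) = sw π a y := rfl
  rw [this] at q2
  omega

end
end
end DSM
namespace DSM
open scoped Classical
open Finset
set_option linter.unusedSectionVars false
set_option linter.unusedVariables false
set_option linter.unusedSimpArgs false

noncomputable section

variable {V : Type} [Fintype V] {G : SimpleGraph V}
variable {k : ℕ} {Big : V → Prop} {π : V → V}

def NN (G : SimpleGraph V) (v : V) : Finset V := univ.filter (fun w => G.Adj v w)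

lemma mem_NN {v w : V} : w ∈ NN G v ↔ G.Adj v w := by simp [NN]

lemma dg_eq (v : V) (W : Finset V) : dg G v W = (NN G v ∩ W).card := by
  unfold dg NN; congr 1; ext w; simp [and_comm]

def sat (π : V → V) (N : Finset V) : Finset V := univ.filter fun u => ∃ y ∈ N, π u = π y

lemma mem_sat {N : Finset V} {u : V} : u ∈ sat π N ↔ ∃ y ∈ N, π u = π y := by simp [sat]

lemma sat_card (h : Valid G k Big π) (x : V) (J : Finset V) :
    (sat π (NN G x) \ J).card ≤ k * dg G x (Cov k π) + dg G x ((univ \ Cov k π) \ J) := by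
  have hsub : sat π (NN G x) \ J ⊆ ((NN G x ∩ Cov k π).biUnion (fun y => fib π (π y))) ∪
      (NN G x ∩ ((univ \ Cov k π) \ J)) := by
    intro u hu
    rw [mem_sdiff, mem_sat] at hu
    obtain ⟨⟨y, hy, e⟩, hJ⟩ := hu
    rw [mem_union]
    by_cases hyc : y ∈ Cov k π
    · left
      rw [mem_biUnion]
      exact ⟨y, mem_inter.2 ⟨hy, hyc⟩, mem_fib.2 e⟩
    · right
      have := (h.sing hyc)
      rw [this.1] at e
      have e := this.2 u e
      subst e
      simp [hy, hyc, hJ]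
  calc _ ≤ _ := card_le_card hsub
    _ ≤ _ := card_union_le _ _
    _ ≤ _ := by
      rw [dg_eq, dg_eq]
      gcongr
      rw [mul_comm]
      apply card_biUnion_le_card_mul
      intro y hy
      exact le_of_eq (mem_Cov.1 (mem_inter.1 hy).2)

section
variable {d : ℝ} (hk : 100 ≤ k) (hd : (k : ℝ) ^ 2 ≤ d)
  (hsmall : ∀ U : Finset V, (U.card : ℝ) ≤ 12 * k ^ 3 * d →
    (ee G U U : ℝ) ≤ U.card * (d / (12 * k ^ 5)))

lemma star_com (h : Valid G k Big π) {x l : V} {F J : Finset V} (hx : x ∉ Cov k π)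
    (hF : ∀ l ∈ F, l ∉ Cov k π) (hl : l ∉ Cov k π) (hlF : l ∉ insert x F) :
    (Q G (star π x F)).card ≤ (Q G (star π x (insert l F))).card +
      2 * (dg G l J + ∑ y ∈ insert x F, dg G l (sat π (NN G y) \ J) + 1) := by
  have hlx : l ≠ x := by rintro rfl; simp at hlF
  have e1 : star π x F l = l := by
    simp only [star, hlF, if_false]; exact (h.sing hl).1
  have e2 : ∀ u, star π x F u = l → u = l := by
    intro u hu
    by_cases hu2 : u ∈ insert x F
    · simp only [star, hu2, if_true] at hu; exact absurd hu.symm hlx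
    · simp only [star, hu2, if_false] at hu; exact (h.sing hl).2 u hu
  have e3 : Function.update (star π x F) l x = star π x (insert l F) := by
    ext v
    by_cases hv : v = l
    · subst hv; simp [star]
    · rw [Function.update_of_ne hv]; simp [star, hv]
  have q := Q_merge (G := G) (π := star π x F) e1 e2 hlx
  rw [e3] at q
  suffices hc : (Com G (star π x F) l x).card ≤
      dg G l J + ∑ y ∈ insert x F, dg G l (sat π (NN G y) \ J) by omega
  have hsub : Com G (star π x F) l x ⊆ ((NN G l ∩ J) ∪
      (insert x F).biUnion (fun y => NN G l ∩ (sat π (NN G y) \ J))).image π := by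
    intro Z hZ
    simp only [Com, mem_filter, mem_univ, true_and] at hZ
    obtain ⟨hZa, hZc, m1, m2⟩ := hZ
    rw [mem_Q] at m1 m2
    obtain ⟨_, u1, v1, hu1, hv1, ad1⟩ := m1
    obtain ⟨_, u2, v2, hu2, hv2, ad2⟩ := m2
    have hu1 := e2 u1 hu1
    subst hu1
    have o : ∀ v, star π x F v = Z → π v = Z := by
      intro v hv
      by_cases hv2 : v ∈ insert x F
      · simp only [star, hv2, if_true] at hv; exact absurd hv.symm hZc
      · simpa only [star, hv2, if_false] using hv
    have hu2 : u2 ∈ insert x F := by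
      by_contra hc
      simp only [star, hc, if_false] at hu2
      have := (h.sing hx).2 u2 hu2
      exact hc (by simp [this])
    rw [mem_image]
    refine ⟨v1, ?_, o v1 hv1⟩
    by_cases hJ : v1 ∈ J
    · simp [hJ, mem_NN, ad1]
    · rw [mem_union]; right
      rw [mem_biUnion]
      refine ⟨u2, hu2, ?_⟩
      rw [mem_inter, mem_sdiff, mem_sat, mem_NN]
      exact ⟨ad1, ⟨v2, mem_NN.2 ad2, (o v1 hv1).trans (o v2 hv2).symm⟩, hJ⟩
  calc _ ≤ _ := card_le_card hsub
    _ ≤ _ := card_image_le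
    _ ≤ _ := card_union_le _ _
    _ ≤ _ := by
      rw [dg_eq]
      gcongr
      refine card_biUnion_le.trans ?_
      simp only [dg_eq]; exact le_rfl

include hk hd hsmall

lemma star_step (h : Valid G k Big π) {x : V} {F L J : Finset V} (hx : x ∉ Cov k π)
    (hL : ∀ l ∈ L, l ∉ Cov k π) (hxL : x ∉ L)
    (hLJ : ∀ l ∈ L, (dg G l J : ℝ) ≤ 4 * d / k)
    (hLs : ∀ l ∈ L, ((sat π (NN G l) \ J).card : ℝ) ≤ 12 * k ^ 2 * d)
    (hxs : ((sat π (NN G x) \ J).card : ℝ) ≤ 4 * k ^ 3 * d)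
    (hdeg : 2 * d / k + k ≤ (dg G x L : ℝ))
    (hFL : F ⊆ L) (hFk : F.card + 2 ≤ k) :
    ∃ l ∈ L, l ∉ F ∧ G.Adj x l ∧ ((Q G (star π x F)).card : ℝ) ≤
      (Q G (star π x (insert l F))).card + 2 * (5.6 * d / k) := by
  have hkr : (100 : ℝ) ≤ k := by exact_mod_cast hk
  have hk0 : (0 : ℝ) < k := by linarith
  have hd0 : 0 < d := by nlinarith
  have hdk : 100 ≤ d / k := by
    rw [le_div_iff₀ hk0]; nlinarith
  set N0 := ⌈d / k⌉₊ with hN0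
  have hN1 : d / k ≤ N0 := Nat.le_ceil _
  have hN2 : (N0 : ℝ) ≤ 2 * d / k := by
    have := Nat.ceil_lt_add_one (a := d / k) (by positivity)
    have e : 2 * d / k = 2 * (d / k) := by ring
    rw [e]; linarith
  have hcs : N0 ≤ ((NN G x ∩ L) \ F).card := by
    have h1 := le_card_sdiff F (NN G x ∩ L)
    rw [dg_eq] at hdeg
    have h2 : (N0 : ℝ) + k ≤ ((NN G x ∩ L).card : ℝ) := by linarith
    have h3 : N0 + k ≤ (NN G x ∩ L).card := by exact_mod_cast h2
    omega
  obtain ⟨cand, hcsub, hcc⟩ := exists_subset_card_eq hcs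
  have hNpos : (0 : ℝ) < N0 := by linarith
  have hk5 : (0 : ℝ) < d / (12 * k ^ 5) := by positivity
  -- each y
  have hbk : 2 * d / k ≤ d := by
    rw [div_le_iff₀ hk0]; nlinarith
  have hy : ∀ y, ((sat π (NN G y) \ J).card : ℝ) ≤ 4 * k ^ 3 * d →
      (ee G cand (sat π (NN G y) \ J) : ℝ) ≤
        (N0 + ((sat π (NN G y) \ J).card : ℝ)) * (d / (12 * k ^ 5)) := by
    intro y hy
    set U' := sat π (NN G y) \ J
    have c1 : ((cand ∪ U').card : ℝ) ≤ N0 + U'.card := by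
      have := card_union_le cand U'
      rw [hcc] at this
      exact_mod_cast this
    have m1 : (ee G cand U' : ℝ) ≤ ee G (cand ∪ U') (cand ∪ U') := by
      exact_mod_cast ee_mono G subset_union_left subset_union_right
    have k3 : (1 : ℝ) ≤ k ^ 3 := one_le_pow₀ (by linarith)
    have k3d : d ≤ k ^ 3 * d := by nlinarith
    have := hsmall (cand ∪ U') (by nlinarith)
    refine m1.trans (this.trans ?_)
    gcongr
  have hk23 : 12 * (k : ℝ) ^ 2 * d ≤ 4 * k ^ 3 * d := by
    have : (0 : ℝ) ≤ (k : ℝ) ^ 2 * d := by positivity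
    have e : 4 * (k : ℝ) ^ 3 * d = 4 * k * (k ^ 2 * d) := by ring
    rw [e]; nlinarith
  have hxF : x ∉ F := fun hh => hxL (hFL hh)
  have hsum : (∑ l ∈ cand, (∑ y ∈ insert x F, (dg G l (sat π (NN G y) \ J) : ℝ))) ≤
      N0 * (1.5 * d / k) := by
    rw [sum_comm]
    have s1 : ∀ y, ∑ l ∈ cand, (dg G l (sat π (NN G y) \ J) : ℝ) = (ee G cand (sat π (NN G y) \ J) : ℝ) := by
      intro y; simp [ee]
    simp only [s1]
    rw [sum_insert hxF]
    have s2 : ∑ y ∈ F, (ee G cand (sat π (NN G y) \ J) : ℝ) ≤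
        F.card * ((N0 + 12 * k ^ 2 * d) * (d / (12 * k ^ 5))) := by
      rw [← nsmul_eq_mul]
      apply sum_le_card_nsmul
      intro y hyF
      have b := hLs y (hFL hyF)
      refine (hy y (b.trans hk23)).trans ?_
      gcongr
    have s3 : (ee G cand (sat π (NN G x) \ J) : ℝ) ≤ (N0 + 4 * k ^ 3 * d) * (d / (12 * k ^ 5)) := by
      refine (hy x hxs).trans ?_
      gcongr
    have hFk' : (F.card : ℝ) ≤ k - 2 := by
      have : ((F.card + 2 : ℕ) : ℝ) ≤ k := by exact_mod_cast hFk
      push_cast at this; linarith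
    have s4 : (F.card : ℝ) * ((N0 + 12 * k ^ 2 * d) * (d / (12 * k ^ 5))) ≤
        (k - 2) * ((N0 + 12 * k ^ 2 * d) * (d / (12 * k ^ 5))) := by
      gcongr
    have s5 : (N0 + 4 * k ^ 3 * d) * (d / (12 * k ^ 5)) +
        (k - 2) * ((N0 + 12 * k ^ 2 * d) * (d / (12 * k ^ 5))) ≤ 17 * k ^ 3 * d * (d / (12 * k ^ 5)) := by
      rw [← mul_assoc, ← add_mul]
      gcongr
      have : (k : ℝ) * N0 ≤ 2 * d := by
        calc (k : ℝ) * N0 ≤ k * (2 * d / k) := by gcongr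
          _ = 2 * d := by field_simp
      have k3 : (2 : ℝ) ≤ k ^ 3 := by
        have := one_le_pow₀ (n := 2) (show (1 : ℝ) ≤ k by linarith)
        nlinarith
      have k3d : 2 * d ≤ k ^ 3 * d := by nlinarith
      have k2d : 0 ≤ (k : ℝ) ^ 2 * d := by positivity
      nlinarith
    have s6 : 17 * k ^ 3 * d * (d / (12 * k ^ 5)) ≤ (d / k) * (1.5 * d / k) := by
      have e1 : 17 * (k : ℝ) ^ 3 * d * (d / (12 * k ^ 5)) = 17 / 12 * (d / k) ^ 2 := by
        field_simp
      have e2 : (d / k) * (1.5 * d / k) = 1.5 * (d / k) ^ 2 := by ring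
      rw [e1, e2]
      gcongr; norm_num
    have s7 : (d / k) * (1.5 * d / k) ≤ N0 * (1.5 * d / k) := by gcongr
    linarith
  have hex : ∃ l ∈ cand, (∑ y ∈ insert x F, (dg G l (sat π (NN G y) \ J) : ℝ)) ≤ 1.5 * d / k := by
    by_contra hcon
    push Not at hcon
    have hne : cand.Nonempty := by
      rw [← card_pos, hcc]; exact_mod_cast hNpos
    have := sum_lt_sum_of_nonempty hne hcon
    rw [sum_const, hcc, nsmul_eq_mul] at this
    linarith
  obtain ⟨l, hlc, hl⟩ := hex
  have hl' := hcsub hlc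
  rw [mem_sdiff, mem_inter, mem_NN] at hl'
  obtain ⟨⟨hxl, hlL⟩, hlF⟩ := hl'
  refine ⟨l, hlL, hlF, hxl, ?_⟩
  have q := star_com (J := J) h hx (fun l hl => hL l (hFL hl)) (hL l hlL) (l := l) (F := F)
    (by rw [mem_insert]; rintro (e | e); exacts [hxL (e ▸ hlL), hlF e])
  have q' : ((Q G (star π x F)).card : ℝ) ≤ (Q G (star π x (insert l F))).card +
      2 * (dg G l J + ∑ y ∈ insert x F, (dg G l (sat π (NN G y) \ J) : ℝ) + 1) := by
    exact_mod_cast q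
  have b1 := hLJ l hlL
  have b2 : 4 * d / k = 4 * (d / k) := by ring
  have b3 : 1.5 * d / k = 1.5 * (d / k) := by ring
  have b4 : 5.6 * d / k = 5.6 * (d / k) := by ring
  rw [b2] at b1
  rw [b3] at hl
  rw [b4]
  linarith

lemma star_move (h : Valid G k Big π) {x : V} {L J : Finset V} (hx : x ∉ Cov k π)
    (hL : ∀ l ∈ L, l ∉ Cov k π) (hxL : x ∉ L)
    (hLJ : ∀ l ∈ L, (dg G l J : ℝ) ≤ 4 * d / k)
    (hLs : ∀ l ∈ L, ((sat π (NN G l) \ J).card : ℝ) ≤ 12 * k ^ 2 * d)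
    (hxs : ((sat π (NN G x) \ J).card : ℝ) ≤ 4 * k ^ 3 * d)
    (hdeg : 2 * d / k + k ≤ (dg G x L : ℝ)) :
    ∃ F ⊆ L, (∀ l ∈ F, G.Adj x l) ∧ F.card + 1 = k ∧
      ((Q G π).card : ℝ) ≤ (Q G (star π x F)).card + 2 * (5.6 * d) := by
  have key : ∀ j, j + 1 ≤ k → ∃ F ⊆ L, (∀ l ∈ F, G.Adj x l) ∧ F.card = j ∧
      ((Q G π).card : ℝ) ≤ (Q G (star π x F)).card + j * (2 * (5.6 * d / k)) := by
    intro j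
    induction j with
    | zero =>
      intro _
      refine ⟨∅, by simp, by simp, by simp, ?_⟩
      have : star π x ∅ = π := by
        ext v
        by_cases hv : v = x
        · subst hv; simp [star, (h.sing hx).1]
        · simp [star, hv]
      rw [this]; simp
    | succ j ih =>
      intro hj
      obtain ⟨F, hFL, hadj, hc, hq⟩ := ih (by omega)
      obtain ⟨l, hlL, hlF, hxl, hq2⟩ := star_step hk hd hsmall h hx hL hxL hLJ hLs hxs hdeg hFL
        (by omega)
      refine ⟨insert l F, insert_subset hlL hFL, ?_, by rw [card_insert_of_notMem hlF, hc], ?_⟩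
      · intro l' hl'
        rw [mem_insert] at hl'
        rcases hl' with rfl | hl'
        exacts [hxl, hadj _ hl']
      · push_cast
        linarith
  obtain ⟨F, hFL, hadj, hc, hq⟩ := key (k - 1) (by omega)
  refine ⟨F, hFL, hadj, by omega, hq.trans ?_⟩
  have hkr : (100 : ℝ) ≤ k := by exact_mod_cast hk
  have hk0 : (0 : ℝ) < k := by linarith
  have hd0 : 0 < d := by nlinarith
  have : ((k - 1 : ℕ) : ℝ) ≤ k := by exact_mod_cast Nat.sub_le k 1
  have h2 : ((k - 1 : ℕ) : ℝ) * (2 * (5.6 * d / k)) ≤ k * (2 * (5.6 * d / k)) := by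
    gcongr
  have h3 : (k : ℝ) * (2 * (5.6 * d / k)) = 2 * (5.6 * d) := by field_simp
  linarith

end
end
end DSM
namespace DSM
open scoped Classical
open Finset
set_option linter.unusedSectionVars false
set_option linter.unusedVariables false
set_option linter.unusedSimpArgs false

noncomputable section

variable {V : Type} [Fintype V] {G : SimpleGraph V}
variable {k : ℕ} {d : ℝ} {Big : V → Prop} {π : V → V}

def wt (G : SimpleGraph V) (k : ℕ) (d : ℝ) (Big : V → Prop) (π : V → V) : ℝ :=
  ((Q G π).card : ℝ) + 26 * d * (Cen k π).card + 2 * (d / k) * ((Cov k π).filter Big).card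

structure Ctx (G : SimpleGraph V) (k : ℕ) (d : ℝ) (Big : V → Prop) (π : V → V) : Prop where
  hk : 100 ≤ k
  hd : (k : ℝ) ^ 2 ≤ d
  hsmall : ∀ U : Finset V, (U.card : ℝ) ≤ 12 * k ^ 3 * d →
    (ee G U U : ℝ) ≤ U.card * (d / (12 * k ^ 5))
  hbig : 2 * d * Fintype.card V ≤ ee G univ univ
  hprop : ∀ U : Finset V, U ≠ univ → (ee G U U : ℝ) ≤ 2 * d * U.card
  hub : ∀ U : Finset V, (ee G U U : ℝ) ≤ 4 * d * U.card
  hBig : ∀ v, Big v ↔ 10 * k * d ≤ dg G v univ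
  val : Valid G k Big π
  max : ∀ ρ, Valid G k Big ρ → wt G k d Big ρ ≤ wt G k d Big π

def R0 (G : SimpleGraph V) (k : ℕ) (d : ℝ) (π : V → V) : Finset V :=
  (univ \ Cov k π).filter fun r => (dg G r (Cov k π) : ℝ) < 10 * k * d ∧
    (dg G r (univ \ Cov k π) : ℝ) ≤ k ^ 2 * d

lemma mem_R0 {r : V} : r ∈ R0 G k d π ↔ r ∉ Cov k π ∧ (dg G r (Cov k π) : ℝ) < 10 * k * d ∧
    (dg G r (univ \ Cov k π) : ℝ) ≤ k ^ 2 * d := by simp [R0]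

lemma dg_self_erase (x : V) (L : Finset V) : dg G x (L.erase x) = dg G x L := by
  rw [dg_eq, dg_eq]; congr 1; ext w
  rw [mem_inter, mem_inter, mem_erase, mem_NN]
  constructor
  · rintro ⟨a, b, c⟩; exact ⟨a, c⟩
  · rintro ⟨a, c⟩; exact ⟨a, a.ne', c⟩

lemma dg_le_add {v : V} {U W W' : Finset V} (h : U ⊆ W ∪ W') : (dg G v U : ℝ) ≤ dg G v W + dg G v W' := by
  exact_mod_cast (dg_mono G h).trans (dg_union_le G v W W')

lemma dg_mono' {v : V} {U W : Finset V} (h : U ⊆ W) : (dg G v U : ℝ) ≤ dg G v W := by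
  exact_mod_cast (dg_mono G h)

namespace Ctx
variable (c : Ctx G k d Big π)
include c

lemma kr : (100 : ℝ) ≤ k := by exact_mod_cast c.hk

lemma d0 : 0 < d := by have := c.kr; have := c.hd; nlinarith

lemma kd : (k : ℝ) ≤ d / k := by
  have := c.kr
  rw [le_div_iff₀ (by linarith)]; have := c.hd; nlinarith

lemma dkd : d / k ≤ d / 100 := by
  have := c.kr; have := c.d0
  gcongr

lemma q2 : 100 * (k * d) ≤ (k : ℝ) ^ 2 * d := by
  have := c.kr; have := c.d0
  have : 0 ≤ k * d := by positivity
  nlinarith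

lemma q3 : 100 * ((k : ℝ) ^ 2 * d) ≤ (k : ℝ) ^ 3 * d := by
  have := c.kr; have := c.d0
  have : 0 ≤ (k : ℝ) ^ 2 * d := by positivity
  nlinarith

lemma q1 : 100 * d ≤ k * d := by
  have := c.kr; have := c.d0
  nlinarith

lemma satR (ρ : V → V) (hρ : Valid G k Big ρ) (x : V) (J : Finset V) (α β : ℝ)
    (h1 : (dg G x (Cov k ρ) : ℝ) ≤ α) (h2 : (dg G x ((univ \ Cov k ρ) \ J) : ℝ) ≤ β) :
    ((sat ρ (NN G x) \ J).card : ℝ) ≤ k * α + β := by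
  have h := sat_card hρ x J
  have h' : ((sat ρ (NN G x) \ J).card : ℝ) ≤
    k * dg G x (Cov k ρ) + dg G x ((univ \ Cov k ρ) \ J) := by exact_mod_cast h
  have : (k : ℝ) * dg G x (Cov k ρ) ≤ k * α := by gcongr
  linarith

lemma no_star {x : V} {L J : Finset V} (hx : x ∉ Cov k π)
    (hL : ∀ l ∈ L, l ∉ Cov k π) (hxL : x ∉ L)
    (hLJ : ∀ l ∈ L, (dg G l J : ℝ) ≤ 4 * d / k)
    (hLs : ∀ l ∈ L, ((sat π (NN G l) \ J).card : ℝ) ≤ 12 * k ^ 2 * d)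
    (hxs : ((sat π (NN G x) \ J).card : ℝ) ≤ 4 * k ^ 3 * d)
    (hdeg : 2 * d / k + k ≤ (dg G x L : ℝ)) : False := by
  obtain ⟨F, hFL, hadj, hc, hq⟩ := star_move c.hk c.hd c.hsmall c.val hx hL hxL hLJ hLs hxs hdeg
  have hk2 : 2 ≤ k := by have := c.hk; omega
  have hF : ∀ l ∈ F, l ∉ Cov k π := fun l hl => hL l (hFL hl)
  have hxF : x ∉ F := fun h => hxL (hFL h)
  have hm := c.max _ (star_valid c.val hx hF hxF hc hadj)
  have e1 := star_Cen hk2 c.val hx hF hxF hc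
  have e2 := star_Cov hk2 c.val hx hF hxF hc
  unfold wt at hm
  rw [e1, e2] at hm
  push_cast at hm
  have : (((Cov k π).filter Big).card : ℝ) ≤ (((Cov k π ∪ insert x F).filter Big).card : ℝ) := by
    exact_mod_cast card_le_card (filter_subset_filter _ subset_union_left)
  have d0 := c.d0
  have kr := c.kr
  have : 2 * (d / k) * (((Cov k π).filter Big).card : ℝ) ≤
    2 * (d / k) * (((Cov k π ∪ insert x F).filter Big).card : ℝ) := by gcongr
  nlinarith

lemma step1 {x : V} (hx : x ∈ R0 G k d π) : (dg G x (R0 G k d π) : ℝ) < 4 * d / k := by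
  by_contra hcon
  push Not at hcon
  have q2 := c.q2
  have q3 := c.q3
  have d0 := c.d0
  have hs : ∀ l ∈ R0 G k d π, ((sat π (NN G l) \ ∅).card : ℝ) ≤ 12 * k ^ 2 * d := by
    intro l hl
    rw [mem_R0] at hl
    have := c.satR π c.val l ∅ _ (k ^ 2 * d) hl.2.1.le (by rw [sdiff_empty]; exact hl.2.2)
    have e : (k : ℝ) * (10 * k * d) + k ^ 2 * d = 11 * (k ^ 2 * d) := by ring
    have e2 : 12 * (k : ℝ) ^ 2 * d = 12 * (k ^ 2 * d) := by ring
    have : 0 ≤ (k : ℝ) ^ 2 * d := by positivity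
    linarith
  apply c.no_star (x := x) (L := (R0 G k d π).erase x) (J := ∅) (mem_R0.1 hx).1
  · intro l hl; exact (mem_R0.1 (mem_of_mem_erase hl)).1
  · simp
  · intro l hl
    have : dg G l ∅ = 0 := by simp [dg]
    rw [this]; push_cast; positivity
  · intro l hl; exact hs l (mem_of_mem_erase hl)
  · have := hs x hx
    have : 0 ≤ (k : ℝ) ^ 2 * d := by positivity
    nlinarith
  · rw [dg_self_erase]
    have := c.kd
    have e : 2 * d / k = 2 * (d / k) := by ring
    have e' : 4 * d / k = 4 * (d / k) := by ring
    have kr := c.kr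
    linarith

lemma step2 {x : V} (hx : x ∉ Cov k π) (hxC : (dg G x (Cov k π) : ℝ) < k ^ 2 * d)
    (hxR : (k : ℝ) ^ 2 * d < dg G x (univ \ Cov k π)) :
    (k : ℝ) ^ 2 * d / 2 ≤ dg G x ((univ \ Cov k π) \ R0 G k d π) := by
  by_contra hcon
  push Not at hcon
  have q1 := c.q1
  have q2 := c.q2
  have q3 := c.q3
  have d0 := c.d0
  have kr := c.kr
  have p2 : 0 ≤ (k : ℝ) ^ 2 * d := by positivity
  have hxR0 : x ∉ R0 G k d π := by
    intro h; have := (mem_R0.1 h).2.2; linarith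
  apply c.no_star (x := x) (L := R0 G k d π) (J := R0 G k d π) hx
  · intro l hl; exact (mem_R0.1 hl).1
  · exact hxR0
  · intro l hl; exact (c.step1 hl).le
  · intro l hl
    rw [mem_R0] at hl
    have := c.satR π c.val l (R0 G k d π) _ (k ^ 2 * d) hl.2.1.le
      ((dg_mono' sdiff_subset).trans hl.2.2)
    have e : (k : ℝ) * (10 * k * d) + k ^ 2 * d = 11 * (k ^ 2 * d) := by ring
    have e2 : 12 * (k : ℝ) ^ 2 * d = 12 * (k ^ 2 * d) := by ring
    linarith
  · have := c.satR π c.val x (R0 G k d π) _ _ hxC.le hcon.le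
    have e : (k : ℝ) * (k ^ 2 * d) = k ^ 3 * d := by ring
    nlinarith
  · have h1 : (dg G x (univ \ Cov k π) : ℝ) ≤ dg G x ((univ \ Cov k π) \ R0 G k d π) +
        dg G x (R0 G k d π) := dg_le_add (by intro u hu; simp at hu ⊢; tauto)
    have h3 := c.dkd
    have h4 := c.kd
    have e : 2 * d / k = 2 * (d / k) := by ring
    rw [e]
    linarith

lemma step3 {e y1 y2 : V} (he : e ∈ Cen k π) (h12 : y1 ≠ y2) (hy1 : π y1 = e) (hy2 : π y2 = e)
    (t1 : 4 * d / k ≤ dg G y1 (R0 G k d π)) (t2 : 4 * d / k ≤ dg G y2 (R0 G k d π))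
    (u1 : (dg G y1 (univ \ R0 G k d π) : ℝ) ≤ 3 * k ^ 2 * d)
    (u2 : (dg G y2 (univ \ R0 G k d π) : ℝ) ≤ 3 * k ^ 2 * d) : False := by
  have q1 := c.q1
  have q2 := c.q2
  have q3 := c.q3
  have d0 := c.d0
  have kr := c.kr
  have kd := c.kd
  have dkd := c.dkd
  have p2 : 0 ≤ (k : ℝ) ^ 2 * d := by positivity
  have hk2 : 2 ≤ k := by have := c.hk; omega
  have e2 : 2 * d / k = 2 * (d / k) := by ring
  have e4 : 4 * d / k = 4 * (d / k) := by ring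
  have hyC : ∀ y, π y = e → y ∈ Cov k π := fun y hy => by rw [mem_Cov, hy]; exact mem_Cen.1 he
  have hCR : ∀ y ∈ Cov k π, y ∉ R0 G k d π := fun y hy h => (mem_R0.1 h).1 hy
  set R := R0 G k d π with hR
  set ρ0 := diss π e with hρ0
  have v0 : Valid G k Big ρ0 := diss_valid c.val e
  have C0 : Cov k ρ0 = Cov k π \ fib π e := diss_Cov hk2 c.val e
  have n0 : (Cen k ρ0).card + 1 = (Cen k π).card := diss_Cen hk2 c.val he
  have Q0 : (Q G π).card ≤ (Q G ρ0).card := diss_Q c.val e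
  have hRC0 : ∀ l ∈ R, l ∉ Cov k ρ0 := by
    intro l hl; rw [C0, mem_sdiff]; rintro ⟨h, _⟩; exact (mem_R0.1 hl).1 h
  have hC0R : Cov k ρ0 ⊆ univ \ R := by
    intro u hu; rw [mem_sdiff]; exact ⟨mem_univ _, fun h => hRC0 u h hu⟩
  have hlout : ∀ l ∈ R, (dg G l (univ \ R) : ℝ) ≤ 10 * k * d + k ^ 2 * d := by
    intro l hl
    have h1 : (dg G l (univ \ R) : ℝ) ≤ dg G l (Cov k π) + dg G l (univ \ Cov k π) :=
      dg_le_add (by intro u hu; rw [mem_union, mem_sdiff]; have := mem_univ u; tauto)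
    have := (mem_R0.1 hl).2
    linarith
  have e3 : 12 * (k : ℝ) ^ 2 * d = 12 * (k ^ 2 * d) := by ring
  -- first star
  have hy1C0 : y1 ∉ Cov k ρ0 := by rw [C0, mem_sdiff, mem_fib]; tauto
  have hy1R : y1 ∉ R := hCR y1 (hyC y1 hy1)
  have hy2R : y2 ∉ R := hCR y2 (hyC y2 hy2)
  obtain ⟨F1, hF1L, hadj1, hc1, hq1⟩ := star_move c.hk c.hd c.hsmall v0 (x := y1) (L := R) (J := R)
    hy1C0 hRC0 hy1R (fun l hl => (c.step1 hl).le)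
    (by
      intro l hl
      have := c.satR ρ0 v0 l R (10 * k * d) (10 * k * d + k ^ 2 * d)
        ((dg_mono' (by rw [C0]; exact sdiff_subset)).trans (mem_R0.1 hl).2.1.le)
        ((dg_mono' (by intro u hu; simp at hu ⊢; tauto)).trans (hlout l hl))
      have e : (k : ℝ) * (10 * k * d) = 10 * (k ^ 2 * d) := by ring
      linarith)
    (by
      have := c.satR ρ0 v0 y1 R (3 * k ^ 2 * d) (3 * k ^ 2 * d)
        ((dg_mono' hC0R).trans u1) ((dg_mono' (by intro u hu; simp at hu ⊢; tauto)).trans u1)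
      have e : (k : ℝ) * (3 * k ^ 2 * d) = 3 * (k ^ 3 * d) := by ring
      linarith)
    (by linarith)
  have hF1C : ∀ l ∈ F1, l ∉ Cov k ρ0 := fun l hl => hRC0 l (hF1L hl)
  have hy1F1 : y1 ∉ F1 := fun h => hy1R (hF1L h)
  set ρ1 := star ρ0 y1 F1 with hρ1
  have v1 : Valid G k Big ρ1 := star_valid v0 hy1C0 hF1C hy1F1 hc1 hadj1
  have C1 : Cov k ρ1 = Cov k ρ0 ∪ insert y1 F1 := star_Cov hk2 v0 hy1C0 hF1C hy1F1 hc1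
  have n1 : (Cen k ρ1).card = (Cen k ρ0).card + 1 := star_Cen hk2 v0 hy1C0 hF1C hy1F1 hc1
  have hy2C1 : y2 ∉ Cov k ρ1 := by
    rw [C1, C0, mem_union, mem_sdiff, mem_fib, mem_insert]
    rintro (h | h | h)
    · exact h.2 hy2
    · exact h12 h.symm
    · exact hy2R (hF1L h)
  have hLC1 : ∀ l ∈ R \ F1, l ∉ Cov k ρ1 := by
    intro l hl
    rw [mem_sdiff] at hl
    rw [C1, mem_union, mem_insert]
    rintro (h | h | h)
    · exact hRC0 l hl.1 h
    · rw [h] at hl; exact hy1R hl.1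
    · exact hl.2 h
  have hF1c : ∀ v, (dg G v F1 : ℝ) ≤ k := by
    intro v
    have := dg_le_card G v F1
    have h3 : dg G v F1 ≤ k := by omega
    exact_mod_cast h3
  have hCp : Cov k ρ1 ⊆ (Cov k π ∪ F1) := by
    rw [C1, C0]
    intro u hu
    rw [mem_union, mem_sdiff, mem_insert] at hu
    rw [mem_union]
    rcases hu with h | h | h
    · exact Or.inl h.1
    · rw [h]; exact Or.inl (hyC y1 hy1)
    · exact Or.inr h
  obtain ⟨F2, hF2L, hadj2, hc2, hq2⟩ := star_move c.hk c.hd c.hsmall v1 (x := y2) (L := R \ F1)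
    (J := R) hy2C1 hLC1 (fun h => hy2R (sdiff_subset h))
    (fun l hl => (c.step1 (sdiff_subset hl)).le)
    (by
      intro l hl
      have hl := sdiff_subset hl
      have h5 : (dg G l (Cov k ρ1) : ℝ) ≤ 10 * k * d + 4 * d / k := by
        have a1 : (dg G l (Cov k ρ1) : ℝ) ≤ dg G l (Cov k π) + dg G l F1 := dg_le_add hCp
        have a2 : (dg G l F1 : ℝ) ≤ dg G l R := dg_mono' hF1L
        have := c.step1 hl
        have := (mem_R0.1 hl).2.1
        linarith
      have := c.satR ρ1 v1 l R _ (10 * k * d + k ^ 2 * d) h5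
        ((dg_mono' (by intro u hu; simp at hu ⊢; tauto)).trans (hlout l hl))
      have e : (k : ℝ) * (10 * k * d + 4 * d / k) = 10 * (k ^ 2 * d) + 4 * d := by
        field_simp
      linarith)
    (by
      have h5 : (dg G y2 (Cov k ρ1) : ℝ) ≤ 3 * k ^ 2 * d + k := by
        have a1 : (dg G y2 (Cov k ρ1) : ℝ) ≤ dg G y2 (univ \ R) + dg G y2 F1 := by
          apply dg_le_add
          refine hCp.trans ?_
          apply union_subset_union _ subset_rfl
          intro u hu; rw [mem_sdiff]; exact ⟨mem_univ _, hCR u hu⟩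
        have := hF1c y2
        linarith
      have := c.satR ρ1 v1 y2 R _ (3 * k ^ 2 * d) h5
        ((dg_mono' (by intro u hu; simp at hu ⊢; tauto)).trans u2)
      have e : (k : ℝ) * (3 * k ^ 2 * d + k) = 3 * (k ^ 3 * d) + k ^ 2 := by ring
      have := c.hd
      linarith)
    (by
      have : (dg G y2 R : ℝ) ≤ dg G y2 (R \ F1) + dg G y2 F1 :=
        dg_le_add (by intro u hu; simp; tauto)
      have := hF1c y2
      linarith)
  have hF2C : ∀ l ∈ F2, l ∉ Cov k ρ1 := fun l hl => hLC1 l (hF2L hl)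
  have hy2F2 : y2 ∉ F2 := fun h => hy2R (sdiff_subset (hF2L h))
  set ρ2 := star ρ1 y2 F2 with hρ2
  have v2 : Valid G k Big ρ2 := star_valid v1 hy2C1 hF2C hy2F2 hc2 hadj2
  have C2 : Cov k ρ2 = Cov k ρ1 ∪ insert y2 F2 := star_Cov hk2 v1 hy2C1 hF2C hy2F2 hc2
  have n2 : (Cen k ρ2).card = (Cen k ρ1).card + 1 := star_Cen hk2 v1 hy2C1 hF2C hy2F2 hc2
  have hm := c.max _ v2
  have hb : ((Cov k π).filter Big).card ≤ ((Cov k ρ2).filter Big).card + k := by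
    calc _ ≤ (((Cov k ρ2).filter Big) ∪ fib π e).card := by
          apply card_le_card
          intro u hu
          rw [mem_filter] at hu
          rw [mem_union, mem_filter, C2, C1, C0]
          by_cases h : u ∈ fib π e
          · exact Or.inr h
          · left
            simp [hu, h]
      _ ≤ _ := by
          refine (card_union_le _ _).trans ?_
          rw [mem_Cen.1 he]
  have hb' : (((Cov k π).filter Big).card : ℝ) ≤ ((Cov k ρ2).filter Big).card + k := by
    exact_mod_cast hb
  have hb2 : 2 * (d / k) * (((Cov k π).filter Big).card : ℝ) ≤
      2 * (d / k) * (((Cov k ρ2).filter Big).card + k) := by gcongr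
  have hb3 : 2 * (d / k) * ((((Cov k ρ2).filter Big).card : ℝ) + k) =
      2 * (d / k) * ((Cov k ρ2).filter Big).card + 2 * d := by field_simp
  have hn : (Cen k ρ2).card = (Cen k π).card + 1 := by omega
  unfold wt at hm
  rw [hn] at hm
  push_cast at hm
  have Q0' : ((Q G π).card : ℝ) ≤ (Q G ρ0).card := by exact_mod_cast Q0
  linarith

end Ctx
end
end DSM
namespace DSM
open scoped Classical
open Finset
set_option linter.unusedSectionVars false
set_option linter.unusedVariables false
set_option linter.unusedSimpArgs false

noncomputable section

variable {V : Type} [Fintype V] {G : SimpleGraph V}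
variable {k : ℕ} {d : ℝ} {Big : V → Prop} {π : V → V}

def Ref (k : ℕ) (Big : V → Prop) (π : V → V) : Finset V :=
  (Cen k π).filter fun c => k < 4 * ((fib π c).filter Big).card

def Bs (k : ℕ) (Big : V → Prop) (π : V → V) : Finset V :=
  (Cov k π).filter fun v => Big v ∨ π v ∈ Ref k Big π

namespace Ctx
variable (c : Ctx G k d Big π)
include c

lemma no_swap {a y : V} (ha : a ∉ Cov k π) (haB : Big a) (hy : y ∈ Cov k π) (hyc : y ≠ π y)
    (hyB : ¬ Big y)
    (hB : G.Adj a (π y) ∨ (Big a ∧ ∃ w, w ≠ y ∧ π w = π y ∧ G.Adj w (π y) ∧ G.Adj w a))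
    (hpar : ∀ v, π v = π y → v = π y ∨ G.Adj v (π y) ∨
      (Big v ∧ ∃ w, w ≠ y ∧ π w = π y ∧ G.Adj w (π y) ∧ G.Adj w v))
    (hcost : (ee G (fib π (π y)) (sat π (NN G a)) : ℝ) ≤ d / (30 * k ^ 2)) : False := by
  have hk2 : 2 ≤ k := by have := c.hk; omega
  have hm := c.max _ (sw_valid c.val hk2 ha hy hyc hB hpar)
  have q := sw_Q c.val hk2 ha hy hyc (sat π (NN G a))
    (fun u w h1 h2 => mem_sat.2 ⟨w, mem_NN.2 h1, h2⟩)
  have q' : ((Q G π).card : ℝ) ≤ (Q G (sw π a y)).card +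
      2 * (ee G (fib π (π y)) (sat π (NN G a)) + 2) := by exact_mod_cast q
  unfold wt at hm
  rw [sw_Cen c.val hk2 ha hy hyc, sw_Cov c.val hk2 ha hy hyc] at hm
  have hb : ((Cov k π).filter Big).card + 1 ≤ ((insert a ((Cov k π).erase y)).filter Big).card := by
    rw [← card_insert_of_notMem (s := (Cov k π).filter Big) (a := a) (by simp [ha])]
    apply card_le_card
    intro u hu
    rw [mem_insert, mem_filter] at hu
    rw [mem_filter, mem_insert, mem_erase]
    rcases hu with rfl | ⟨h1, h2⟩
    · exact ⟨Or.inl rfl, haB⟩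
    · refine ⟨Or.inr ⟨?_, h1⟩, h2⟩
      rintro rfl; exact hyB h2
  have hb' : (((Cov k π).filter Big).card : ℝ) + 1 ≤
    ((insert a ((Cov k π).erase y)).filter Big).card := by exact_mod_cast hb
  have d0 := c.d0
  have kr := c.kr
  have kd := c.kd
  have h2 : 2 * (d / k) * ((((Cov k π).filter Big).card : ℝ) + 1) ≤
    2 * (d / k) * ((insert a ((Cov k π).erase y)).filter Big).card := by gcongr
  have h3 : d / (30 * k ^ 2) ≤ d / k / 2 := by
    rw [div_div]
    exact div_le_div_of_nonneg_left d0.le (by positivity) (by nlinarith)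
  linarith

lemma step4 {a : V} (ha : a ∉ Cov k π) (h1 : (dg G a (Cov k π) : ℝ) < k ^ 2 * d)
    (h2 : (dg G a (univ \ Cov k π) : ℝ) ≤ k ^ 2 * d) (h3 : 10 * k * d ≤ dg G a (Cov k π)) :
    5 * k * d ≤ dg G a (Bs k Big π) := by
  by_contra hcon
  push Not at hcon
  have d0 := c.d0
  have kr := c.kr
  have kd := c.kd
  have q3 := c.q3
  have hk := c.hk
  have haB : Big a := by
    rw [c.hBig]
    exact h3.trans (dg_mono' (subset_univ _))
  have h4 : 5 * k * d < (dg G a (Cov k π \ Bs k Big π) : ℝ) := by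
    have : (dg G a (Cov k π) : ℝ) ≤ dg G a (Bs k Big π) + dg G a (Cov k π \ Bs k Big π) :=
      dg_le_add (by intro u hu; rw [mem_union, mem_sdiff]; tauto)
    linarith
  set E := (NN G a ∩ (Cov k π \ Bs k Big π)).image π with hE
  have hEc : ∀ e ∈ E, e ∈ Cen k π := by
    intro e he
    rw [hE, mem_image] at he
    obtain ⟨z, hz, rfl⟩ := he
    simp only [mem_inter, mem_sdiff] at hz
    rw [mem_Cen]; exact mem_Cov.1 hz.2.1
  have hEcard : 5 * d < (E.card : ℝ) := by
    have h5 : (NN G a ∩ (Cov k π \ Bs k Big π)).card ≤ k * E.card := by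
      apply card_le_mul_card_image
      intro e he
      rw [← mem_Cen.1 (hEc e he)]
      apply card_le_card
      intro u hu
      rw [mem_filter] at hu
      exact mem_fib.2 hu.2
    rw [dg_eq] at h4
    have h6 : ((NN G a ∩ (Cov k π \ Bs k Big π)).card : ℝ) ≤ k * E.card := by exact_mod_cast h5
    have h7 : (k : ℝ) * (5 * d) < k * E.card := by linarith
    exact lt_of_mul_lt_mul_left h7 (by linarith)
  set U := sat π (NN G a) with hU
  have hUc : (U.card : ℝ) ≤ 2 * (k ^ 3 * d) := by
    have := c.satR π c.val a ∅ _ (k ^ 2 * d) h1.le (by rw [sdiff_empty]; exact h2)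
    rw [sdiff_empty] at this
    have e : (k : ℝ) * (k ^ 2 * d) = k ^ 3 * d := by ring
    have : 0 ≤ (k : ℝ) ^ 2 * d := by positivity
    linarith
  have hUU : (ee G U U : ℝ) ≤ d ^ 2 / (6 * k ^ 2) := by
    have p3 : 0 ≤ (k : ℝ) ^ 3 * d := by positivity
    have := c.hsmall U (by nlinarith)
    calc (ee G U U : ℝ) ≤ U.card * (d / (12 * k ^ 5)) := this
      _ ≤ (2 * (k ^ 3 * d)) * (d / (12 * k ^ 5)) := by gcongr
      _ = d ^ 2 / (6 * k ^ 2) := by field_simp; norm_num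
  have hsum : ∑ e ∈ E, ee G (fib π e) U ≤ ee G U U := by
    have : ∑ e ∈ E, ee G (fib π e) U = ee G (E.biUnion (fib π)) U := by
      unfold ee
      rw [sum_biUnion]
      intro x _ y _ hxy
      rw [Function.onFun, Finset.disjoint_left]
      intro u hu hu'
      rw [mem_fib] at hu hu'
      exact hxy (hu.symm.trans hu')
    rw [this]
    apply ee_mono G _ subset_rfl
    intro u hu
    rw [mem_biUnion] at hu
    obtain ⟨e, he, hu⟩ := hu
    rw [hE, mem_image] at he
    obtain ⟨z, hz, rfl⟩ := he
    rw [hU, mem_sat]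
    exact ⟨z, (mem_inter.1 hz).1, mem_fib.1 hu⟩
  have hex : ∃ e ∈ E, (ee G (fib π e) U : ℝ) ≤ d / (30 * k ^ 2) := by
    by_contra hc
    push Not at hc
    have hs : ∑ e ∈ E, d / (30 * (k : ℝ) ^ 2) ≤ ∑ e ∈ E, (ee G (fib π e) U : ℝ) :=
      sum_le_sum fun e he => (hc e he).le
    rw [sum_const, nsmul_eq_mul] at hs
    have hs2 : ∑ e ∈ E, (ee G (fib π e) U : ℝ) ≤ ee G U U := by exact_mod_cast hsum
    have : 5 * d * (d / (30 * (k : ℝ) ^ 2)) < E.card * (d / (30 * (k : ℝ) ^ 2)) := by gcongr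
    have e : 5 * d * (d / (30 * (k : ℝ) ^ 2)) = d ^ 2 / (6 * k ^ 2) := by field_simp; norm_num
    linarith
  obtain ⟨e, he, hcost⟩ := hex
  have heC := hEc e he
  rw [hE, mem_image] at he
  obtain ⟨z, hz, hze⟩ := he
  simp only [mem_inter, mem_sdiff, mem_NN, Bs, mem_filter, not_and, not_or] at hz
  obtain ⟨haz, hzC, hz2⟩ := hz
  obtain ⟨hzB, hzR⟩ := hz2 hzC
  rw [hze] at hzR
  have hfew : 4 * ((fib π e).filter Big).card ≤ k := by
    simp only [Ref, mem_filter, not_and, not_lt] at hzR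
    exact hzR heC
  have hee : π e = e := c.val.cen_self (by omega) heC
  -- parents
  have hpar : ∃ p : V → V, ∀ v, π v = e → v = e ∨ G.Adj v e ∨
      (Big v ∧ π (p v) = e ∧ G.Adj (p v) e ∧ G.Adj (p v) v) := by
    have : ∀ v, ∃ w, π v = e → v = e ∨ G.Adj v e ∨
      (Big v ∧ π w = e ∧ G.Adj w e ∧ G.Adj w v) := by
      intro v
      by_cases hv : π v = e
      · have := (c.val v).2.2
        rw [hv] at this
        rcases this with h | h | ⟨h, w, hw⟩
        · exact ⟨v, fun _ => Or.inl h⟩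
        · exact ⟨v, fun _ => Or.inr (Or.inl h)⟩
        · exact ⟨w, fun _ => Or.inr (Or.inr ⟨h, hw⟩)⟩
      · exact ⟨v, fun h => absurd h hv⟩
    choose p hp using this
    exact ⟨p, hp⟩
  obtain ⟨p, hp⟩ := hpar
  set X := ((fib π e).filter Big ∪ ((fib π e).filter Big).image p) ∪ {e, z} with hX
  have hXc : X.card < (fib π e).card := by
    have x1 := card_union_le ((fib π e).filter Big ∪ ((fib π e).filter Big).image p) {e, z}
    have x2 := card_union_le ((fib π e).filter Big) (((fib π e).filter Big).image p)
    have x3 : (((fib π e).filter Big).image p).card ≤ _ := card_image_le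
    have x4 : ({e, z} : Finset V).card ≤ 2 := card_le_two
    have x5 := mem_Cen.1 heC
    rw [← hX] at x1
    omega
  obtain ⟨y, hy, hyX⟩ := exists_mem_notMem_of_card_lt_card hXc
  rw [mem_fib] at hy
  simp only [hX, mem_union, mem_filter, mem_image, mem_insert, mem_singleton, mem_fib, not_or,
    not_and, not_exists] at hyX
  obtain ⟨⟨hyB, hyP⟩, hye, hyz⟩ := hyX
  refine c.no_swap (a := a) (y := y) ha haB ?_ ?_ (hyB hy) ?_ ?_ ?_
  · rw [mem_Cov, hy]; exact mem_Cen.1 heC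
  · rw [hy]; exact hye
  · rw [hy]
    rcases hp z hze with h | h | h
    · left; rw [← h]; exact haz
    · right; exact ⟨haB, z, fun h => hyz h.symm, hze, h, haz.symm⟩
    · exact absurd h.1 hzB
  · intro v hv
    rw [hy] at hv ⊢
    rcases hp v hv with h | h | ⟨hB, h6, h7⟩
    · exact Or.inl h
    · exact Or.inr (Or.inl h)
    · exact Or.inr (Or.inr ⟨hB, p v, hyP v ⟨hv, hB⟩, h6, h7⟩)
  · rw [hy]; exact hcost

end Ctx
end
end DSM
namespace DSM
open scoped Classical
open Finset
set_option linter.unusedSectionVars false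
set_option linter.unusedVariables false
set_option linter.unusedSimpArgs false

noncomputable section

variable {V : Type} [Fintype V] {G : SimpleGraph V}
variable {k : ℕ} {d : ℝ} {Big : V → Prop} {π : V → V}

lemma mass {U W : Finset V} {t : ℝ} (h : ∀ u ∈ U, t ≤ dg G u W) : t * U.card ≤ ee G U W := by
  have : ∑ u ∈ U, t ≤ ∑ u ∈ U, (dg G u W : ℝ) := sum_le_sum h
  rw [sum_const, nsmul_eq_mul] at this
  unfold ee
  push_cast
  linarith

lemma mass_le {U W : Finset V} {t : ℝ} (h : ∀ u ∈ U, (dg G u W : ℝ) ≤ t) :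
    (ee G U W : ℝ) ≤ t * U.card := by
  have : ∑ u ∈ U, (dg G u W : ℝ) ≤ ∑ u ∈ U, t := sum_le_sum h
  rw [sum_const, nsmul_eq_mul] at this
  unfold ee
  push_cast
  linarith

def Kset (G : SimpleGraph V) (k : ℕ) (d : ℝ) (π : V → V) : Finset V :=
  (univ \ Cov k π) \ R0 G k d π

def Tset (G : SimpleGraph V) (k : ℕ) (d : ℝ) (π : V → V) : Finset V :=
  (Cov k π).filter fun v => 4 * d / k ≤ (dg G v (R0 G k d π) : ℝ)

def Sset (G : SimpleGraph V) (k : ℕ) (d : ℝ) (π : V → V) : Finset V :=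
  (Cov k π).filter fun v => 3 * k ^ 2 * d < (dg G v (univ \ R0 G k d π) : ℝ)

def Bn (G : SimpleGraph V) (k : ℕ) (d : ℝ) (Big : V → Prop) (π : V → V) : Finset V :=
  (Cov k π).filter fun v => Big v ∧ v ∉ Tset G k d π

def Aset (G : SimpleGraph V) (k : ℕ) (d : ℝ) (π : V → V) : Finset V :=
  (univ \ Cov k π).filter fun v => k ^ 2 * d ≤ (dg G v (Cov k π) : ℝ)

def Hset (G : SimpleGraph V) (k : ℕ) (d : ℝ) (π : V → V) : Finset V :=
  (univ \ Cov k π).filter fun v => (dg G v (Cov k π) : ℝ) < k ^ 2 * d ∧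
    k ^ 2 * d < (dg G v (univ \ Cov k π) : ℝ)

def Mset (G : SimpleGraph V) (k : ℕ) (d : ℝ) (π : V → V) : Finset V :=
  (univ \ Cov k π).filter fun v => (dg G v (Cov k π) : ℝ) < k ^ 2 * d ∧
    (dg G v (univ \ Cov k π) : ℝ) ≤ k ^ 2 * d ∧ 10 * k * d ≤ (dg G v (Cov k π) : ℝ)

namespace Ctx
variable (c : Ctx G k d Big π)
include c

lemma mass_disj {U W : Finset V} {t : ℝ} (h : ∀ u ∈ U, t * d ≤ dg G u W) (hd : Disjoint U W) :
    t * U.card ≤ 2 * (U.card + W.card) := by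
  have h1 := mass h
  have h2 := two_ee_le G hd
  have h3 := c.hub (U ∪ W)
  rw [card_union_of_disjoint hd] at h3
  have h2' : 2 * (ee G U W : ℝ) ≤ ee G (U ∪ W) (U ∪ W) := by exact_mod_cast h2
  push_cast at h3
  have d0 := c.d0
  have : d * (t * U.card) ≤ d * (2 * (U.card + W.card)) := by linarith
  exact le_of_mul_le_mul_left this d0

lemma mass_sub {U W : Finset V} {t : ℝ} (h : ∀ u ∈ U, t * d ≤ dg G u W) (hs : U ⊆ W) :
    t * U.card ≤ 4 * W.card := by
  have h1 := mass h
  have h2 : (ee G U W : ℝ) ≤ ee G W W := by exact_mod_cast ee_mono G hs subset_rfl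
  have h3 := c.hub W
  have d0 := c.d0
  have : d * (t * U.card) ≤ d * (4 * W.card) := by linarith
  exact le_of_mul_le_mul_left this d0

lemma covc : ((Cov k π).card : ℝ) = k * (Cen k π).card := by exact_mod_cast card_Cov k π

lemma bA : (k : ℝ) * (Aset G k d π).card ≤ 2.001 * (Cen k π).card := by
  have kr := c.kr
  have h := c.mass_disj (U := Aset G k d π) (W := Cov k π) (t := k ^ 2)
    (fun u hu => (mem_filter.1 hu).2)
    (disjoint_left.2 fun u hu => by have := (mem_filter.1 hu).1; simp at this; exact this)
  rw [c.covc] at h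
  set α : ℝ := ((Aset G k d π).card : ℝ)
  set p : ℝ := ((Cen k π).card : ℝ)
  have α0 : 0 ≤ α := Nat.cast_nonneg _
  have p0 : 0 ≤ p := Nat.cast_nonneg _
  have h2 : (k : ℝ) * (k * α) ≤ k * (2.001 * p) := by
    have : (100 : ℝ) * 100 * α ≤ k * (k * α) := by
      have h1 : 100 * α ≤ k * α := by gcongr
      have h3 : 100 * (k * α) ≤ k * (k * α) := by gcongr
      linarith
    have : 0 ≤ k * p := by positivity
    nlinarith
  exact le_of_mul_le_mul_left h2 (by linarith)

lemma bM0 : ((Mset G k d π).card : ℝ) ≤ 0.21 * (Cen k π).card := by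
  have kr := c.kr
  have h := c.mass_disj (U := Mset G k d π) (W := Cov k π) (t := 10 * k)
    (fun u hu => (mem_filter.1 hu).2.2.2)
    (disjoint_left.2 fun u hu => by have := (mem_filter.1 hu).1; simp at this; exact this)
  rw [c.covc] at h
  set α : ℝ := ((Mset G k d π).card : ℝ)
  set p : ℝ := ((Cen k π).card : ℝ)
  have α0 : 0 ≤ α := Nat.cast_nonneg _
  have p0 : 0 ≤ p := Nat.cast_nonneg _
  have h2 : (k : ℝ) * α ≤ k * (0.21 * p) := by
    have : (100 : ℝ) * α ≤ k * α := by gcongr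
    have : 0 ≤ k * p := by positivity
    nlinarith
  exact le_of_mul_le_mul_left h2 (by linarith)

lemma bK : ((Kset G k d π).card : ℝ) ≤ (Aset G k d π).card + (Hset G k d π).card +
    (Mset G k d π).card := by
  have hs : Kset G k d π ⊆ (Aset G k d π ∪ Hset G k d π) ∪ Mset G k d π := by
    intro u hu
    simp only [Kset, mem_sdiff, mem_univ, true_and, mem_R0, not_and, not_lt, not_le] at hu
    obtain ⟨hu, h2⟩ := hu
    have h2 := h2 hu
    simp only [Aset, Hset, Mset, mem_union, mem_filter, mem_sdiff, mem_univ, true_and, hu,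
      not_false_eq_true]
    by_cases a1 : (k : ℝ) ^ 2 * d ≤ dg G u (Cov k π)
    · exact Or.inl (Or.inl a1)
    · push Not at a1
      by_cases a2 : (k : ℝ) ^ 2 * d < dg G u (univ \ Cov k π)
      · exact Or.inl (Or.inr ⟨a1, a2⟩)
      · push Not at a2
        right
        refine ⟨a1, a2, ?_⟩
        by_contra a3
        push Not at a3
        have := h2 a3
        linarith
  have h1 := card_le_card hs
  have h2 := card_union_le (Aset G k d π ∪ Hset G k d π) (Mset G k d π)
  have h3 := card_union_le (Aset G k d π) (Hset G k d π)
  have h4 : (Kset G k d π).card ≤ (Aset G k d π).card + (Hset G k d π).card +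
    (Mset G k d π).card := by omega
  exact_mod_cast h4

lemma bH : (k : ℝ) ^ 2 * (Hset G k d π).card ≤ 8.01 * ((Aset G k d π).card +
    (Mset G k d π).card) := by
  have kr := c.kr
  have d0 := c.d0
  have hK := c.bK
  have h := c.mass_sub (U := Hset G k d π) (W := Kset G k d π) (t := k ^ 2 / 2)
    (fun u hu => by
      have := (mem_filter.1 hu)
      have h2 := c.step2 (x := u) (by have := this.1; simp at this; exact this) this.2.1 this.2.2
      unfold Kset
      linarith)
    (fun u hu => by
      have := (mem_filter.1 hu)
      rw [Kset, mem_sdiff]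
      refine ⟨this.1, fun h => ?_⟩
      have h2 := (mem_R0.1 h).2.2
      linarith [this.2.2])
  set η : ℝ := ((Hset G k d π).card : ℝ)
  have η0 : 0 ≤ η := Nat.cast_nonneg _
  have : (10000 : ℝ) * η ≤ k ^ 2 * η := by
    gcongr; nlinarith
  linarith

lemma bCp : ((univ \ R0 G k d π).card : ℝ) ≤ 1.01 * (k * (Cen k π).card) := by
  have kr := c.kr
  have e : univ \ R0 G k d π ⊆ Cov k π ∪ Kset G k d π := by
    intro u hu
    simp only [Kset, mem_union, mem_sdiff, mem_univ, true_and] at hu ⊢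
    tauto
  have h1 := (card_le_card e).trans (card_union_le _ _)
  have h2 : ((univ \ R0 G k d π).card : ℝ) ≤ (Cov k π).card + (Kset G k d π).card := by
    exact_mod_cast h1
  rw [c.covc] at h2
  have hK := c.bK
  have hA := c.bA
  have hM := c.bM0
  have hH := c.bH
  set p : ℝ := ((Cen k π).card : ℝ)
  have p0 : 0 ≤ p := Nat.cast_nonneg _
  have a1 : (100 : ℝ) * (Aset G k d π).card ≤ k * (Aset G k d π).card := by gcongr
  have a2 : (10000 : ℝ) * (Hset G k d π).card ≤ k ^ 2 * (Hset G k d π).card := by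
    gcongr; nlinarith
  have a3 : 100 * p ≤ k * p := by gcongr
  linarith

lemma bS : (k : ℝ) * (Sset G k d π).card ≤ 1.35 * (Cen k π).card := by
  have kr := c.kr
  have d0 := c.d0
  have h := c.mass_sub (U := Sset G k d π) (W := univ \ R0 G k d π) (t := 3 * k ^ 2)
    (fun u hu => (mem_filter.1 hu).2.le)
    (fun u hu => by
      have := (mem_filter.1 hu).1
      rw [mem_sdiff]
      exact ⟨mem_univ _, fun h => (mem_R0.1 h).1 this⟩)
  have h2 := c.bCp
  have h3 : (k : ℝ) * (k * (Sset G k d π).card) ≤ k * (1.35 * (Cen k π).card) := by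
    have : (0 : ℝ) ≤ k * (Cen k π).card := by positivity
    linarith
  exact le_of_mul_le_mul_left h3 (by linarith)

lemma bBn : ((Bn G k d Big π).card : ℝ) ≤ 0.41 * (Cen k π).card := by
  have kr := c.kr
  have d0 := c.d0
  have h := c.mass_sub (U := Bn G k d Big π) (W := univ \ R0 G k d π) (t := 9.9 * k)
    (fun u hu => by
      simp only [Bn, Tset, mem_filter, not_and, not_le] at hu
      obtain ⟨h1, h2, h3⟩ := hu
      have h3 := h3 h1
      rw [c.hBig] at h2
      have h4 : (dg G u univ : ℝ) ≤ dg G u (R0 G k d π) + dg G u (univ \ R0 G k d π) :=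
        dg_le_add (by intro u hu; rw [mem_union, mem_sdiff]; tauto)
      have h5 := c.dkd
      have h6 := c.q1
      have e : 4 * d / k = 4 * (d / k) := by ring
      linarith)
    (fun u hu => by
      have := (mem_filter.1 hu).1
      rw [mem_sdiff]
      exact ⟨mem_univ _, fun h => (mem_R0.1 h).1 this⟩)
  have h2 := c.bCp
  have h3 : (k : ℝ) * ((Bn G k d Big π).card) ≤ k * (0.41 * (Cen k π).card) := by
    have : (0 : ℝ) ≤ k * (Cen k π).card := by positivity
    linarith
  exact le_of_mul_le_mul_left h3 (by linarith)

lemma injT : Set.InjOn π ((Tset G k d π \ Sset G k d π : Finset V) : Set V) := by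
  intro y1 h1 y2 h2 e
  by_contra hne
  simp only [mem_coe, mem_sdiff, Tset, Sset, mem_filter, not_and, not_lt] at h1 h2
  exact c.step3 (e := π y1) (mem_Cen.2 (mem_Cov.1 h1.1.1)) hne rfl e.symm h1.1.2 h2.1.2
    (h1.2 h1.1.1) (h2.2 h2.1.1)

lemma bT : ((Tset G k d π).card : ℝ) ≤ (Cen k π).card + (Sset G k d π).card := by
  have h1 : (Tset G k d π \ Sset G k d π).card ≤ (Cen k π).card := by
    apply card_le_card_of_injOn π _ c.injT
    intro y hy
    have h1 : y ∈ Tset G k d π \ Sset G k d π := hy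
    rw [mem_coe]
    exact mem_Cen.2 (mem_Cov.1 (mem_filter.1 (mem_sdiff.1 h1).1).1)
  have h2 := le_card_sdiff (Sset G k d π) (Tset G k d π)
  have h3 : (Tset G k d π).card ≤ (Cen k π).card + (Sset G k d π).card := by omega
  exact_mod_cast h3

lemma bRef : (k : ℝ) * (Ref k Big π).card ≤ 1.8 * (Cen k π).card := by
  have kr := c.kr
  have d0 := c.d0
  have hblk : ∀ e ∈ Ref k Big π, 0.24 * (k : ℝ) ≤ ((fib π e ∩ (Sset G k d π ∪ Bn G k d Big π)).card : ℝ) := by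
    intro e he
    simp only [Ref, mem_filter] at he
    obtain ⟨heC, he⟩ := he
    have hsub : (fib π e).filter Big ⊆ (fib π e ∩ (Sset G k d π ∪ Bn G k d Big π)) ∪
        (fib π e ∩ (Tset G k d π \ Sset G k d π)) := by
      intro u hu
      rw [mem_filter] at hu
      have huC : u ∈ Cov k π := by
        rw [mem_Cov, mem_fib.1 hu.1]; exact mem_Cen.1 heC
      by_cases hS : u ∈ Sset G k d π
      · simp [hS, hu.1]
      · by_cases hT : u ∈ Tset G k d π
        · simp [hS, hT, hu.1]
        · simp [hS, hT, hu.1, Bn, huC, hu.2]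
    have h1 : (fib π e ∩ (Tset G k d π \ Sset G k d π)).card ≤ 1 := by
      rw [card_le_one]
      intro a ha b hb
      rw [mem_inter, mem_fib] at ha hb
      exact c.injT (mem_coe.2 ha.2) (mem_coe.2 hb.2) (ha.1.trans hb.1.symm)
    have h2 := (card_le_card hsub).trans (card_union_le _ _)
    have h3 : k ≤ 4 * (fib π e ∩ (Sset G k d π ∪ Bn G k d Big π)).card + 4 := by omega
    have h4 : (k : ℝ) ≤ 4 * (fib π e ∩ (Sset G k d π ∪ Bn G k d Big π)).card + 4 := by
      exact_mod_cast h3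
    linarith
  have hs : ∑ e ∈ Ref k Big π, (fib π e ∩ (Sset G k d π ∪ Bn G k d Big π)).card ≤
      (Sset G k d π ∪ Bn G k d Big π).card := by
    rw [← card_biUnion]
    · apply card_le_card
      intro u hu
      rw [mem_biUnion] at hu
      obtain ⟨e, _, hu⟩ := hu
      exact (mem_inter.1 hu).2
    · intro x _ y _ hxy
      rw [Function.onFun, Finset.disjoint_left]
      intro u hu hu'
      rw [mem_inter, mem_fib] at hu hu'
      exact hxy (hu.1.symm.trans hu'.1)
  have hs' : ∑ e ∈ Ref k Big π, ((fib π e ∩ (Sset G k d π ∪ Bn G k d Big π)).card : ℝ) ≤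
      (Sset G k d π).card + (Bn G k d Big π).card := by
    exact_mod_cast hs.trans (card_union_le _ _)
  have h5 := sum_le_sum hblk
  rw [sum_const, nsmul_eq_mul] at h5
  have h6 := c.bS
  have h7 := c.bBn
  have h8 : (100 : ℝ) * (Sset G k d π).card ≤ k * (Sset G k d π).card := by gcongr
  have : (0 : ℝ) ≤ (Cen k π).card := Nat.cast_nonneg _
  linarith

lemma bBs : ((Bs k Big π).card : ℝ) ≤ 3.3 * (Cen k π).card := by
  have kr := c.kr
  have hsub : Bs k Big π ⊆ (Tset G k d π ∪ Bn G k d Big π) ∪ (Ref k Big π).biUnion (fib π) := by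
    intro u hu
    simp only [Bs, mem_filter] at hu
    obtain ⟨h1, h2⟩ := hu
    rw [mem_union, mem_union]
    by_cases hB : Big u
    · left
      by_cases hT : u ∈ Tset G k d π
      · exact Or.inl hT
      · right; simp [Bn, h1, hB, hT]
    · right
      rw [mem_biUnion]
      exact ⟨π u, h2.resolve_left hB, mem_fib.2 rfl⟩
  have h1 := card_le_card hsub
  have h2 := card_union_le (Tset G k d π ∪ Bn G k d Big π) ((Ref k Big π).biUnion (fib π))
  have h3 := card_union_le (Tset G k d π) (Bn G k d Big π)
  have h4 : ((Ref k Big π).biUnion (fib π)).card ≤ (Ref k Big π).card * k := by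
    apply card_biUnion_le_card_mul
    intro e he
    exact le_of_eq (mem_Cen.1 (mem_filter.1 he).1)
  have h5 : (Bs k Big π).card ≤ (Tset G k d π).card + (Bn G k d Big π).card +
      k * (Ref k Big π).card := by rw [mul_comm k]; omega
  have h6 : ((Bs k Big π).card : ℝ) ≤ (Tset G k d π).card + (Bn G k d Big π).card +
      k * (Ref k Big π).card := by exact_mod_cast h5
  have a1 := c.bT
  have a2 := c.bBn
  have a3 := c.bRef
  have a4 := c.bS
  have h8 : (100 : ℝ) * (Sset G k d π).card ≤ k * (Sset G k d π).card := by gcongr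
  have : (0 : ℝ) ≤ (Cen k π).card := Nat.cast_nonneg _
  linarith

lemma bM : (k : ℝ) * (Mset G k d π).card ≤ 1.4 * (Cen k π).card := by
  have kr := c.kr
  have h := c.mass_disj (U := Mset G k d π) (W := Bs k Big π) (t := 5 * k)
    (fun u hu => by
      have := (mem_filter.1 hu)
      exact c.step4 (by have := this.1; simp at this; exact this) this.2.1 this.2.2.1 this.2.2.2)
    (disjoint_left.2 fun u hu hu' => by
      have h1 := (mem_filter.1 hu).1
      simp at h1
      exact h1 (mem_filter.1 hu').1)
  have h2 := c.bBs
  have h8 : (100 : ℝ) * (Mset G k d π).card ≤ k * (Mset G k d π).card := by gcongr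
  have : (0 : ℝ) ≤ (Cen k π).card := Nat.cast_nonneg _
  linarith

lemma bKf : (k : ℝ) * (Kset G k d π).card ≤ 5 * (Cen k π).card := by
  have kr := c.kr
  have hK := c.bK
  have hA := c.bA
  have hM := c.bM
  have hH := c.bH
  have h1 : (k : ℝ) * (Kset G k d π).card ≤ k * ((Aset G k d π).card + (Hset G k d π).card +
    (Mset G k d π).card) := by gcongr
  have h2 : (k : ℝ) * (Hset G k d π).card ≤ k ^ 2 * (Hset G k d π).card := by
    gcongr; nlinarith
  have a1 : (100 : ℝ) * (Aset G k d π).card ≤ k * (Aset G k d π).card := by gcongr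
  have a2 : (100 : ℝ) * (Mset G k d π).card ≤ k * (Mset G k d π).card := by gcongr
  have : (0 : ℝ) ≤ (Cen k π).card := Nat.cast_nonneg _
  linarith

end Ctx
end
end DSM
namespace DSM
open scoped Classical
open Finset
set_option linter.unusedSectionVars false
set_option linter.unusedVariables false
set_option linter.unusedSimpArgs false

noncomputable section

variable {V : Type} [Fintype V] {G : SimpleGraph V}
variable {k : ℕ} {d : ℝ} {Big : V → Prop} {π : V → V}

def PP (G : SimpleGraph V) (U W : Finset V) : Finset (V × V) :=
  (U ×ˢ W).filter fun x => G.Adj x.1 x.2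

lemma card_PP (U W : Finset V) : (PP G U W).card = ee G U W := by
  unfold PP ee dg
  rw [card_filter, sum_product]
  simp only [card_filter]

def Lab (G : SimpleGraph V) (k : ℕ) (d : ℝ) (π : V → V) : Finset V := Cen k π ∪ Kset G k d π

def QL (G : SimpleGraph V) (k : ℕ) (d : ℝ) (π : V → V) : Finset (V × V) :=
  (Q G π).filter fun x => x.1 ∈ Lab G k d π ∧ x.2 ∈ Lab G k d π

lemma Q_id : ee G univ univ ≤ (Q G (id : V → V)).card := by
  rw [← card_PP]
  apply card_le_card
  rintro ⟨u, v⟩ h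
  simp only [PP, mem_filter] at h
  rw [mem_Q]
  exact ⟨h.2.ne, u, v, rfl, rfl, h.2⟩

namespace Ctx
variable (c : Ctx G k d Big π)
include c

lemma lab_of {u : V} (hu : u ∉ R0 G k d π) : π u ∈ Lab G k d π := by
  rw [Lab, mem_union]
  by_cases h : u ∈ Cov k π
  · exact Or.inl (mem_Cen.2 (mem_Cov.1 h))
  · right
    rw [(c.val.sing h).1, Kset]
    simp [h, hu]

lemma QL_bound : (Q G π).card + ee G (univ \ R0 G k d π) (univ \ R0 G k d π) ≤
    (QL G k d π).card + ee G univ univ := by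
  set X := univ \ R0 G k d π with hX
  have h1 : Q G π \ QL G k d π ⊆ (PP G univ univ \ PP G X X).image (fun x => (π x.1, π x.2)) := by
    rintro ⟨A, B⟩ h
    rw [mem_sdiff] at h
    obtain ⟨h1, h2⟩ := h
    have h3 := h1
    rw [mem_Q] at h3
    obtain ⟨hne, u, v, hu, hv, huv⟩ := h3
    rw [mem_image]
    refine ⟨(u, v), ?_, by simp [hu, hv]⟩
    rw [mem_sdiff]
    refine ⟨by simp [PP, huv], fun h4 => h2 ?_⟩
    simp only [PP, mem_filter, mem_product, hX, mem_sdiff] at h4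
    simp only [QL, mem_filter]
    refine ⟨h1, ?_, ?_⟩
    · rw [← hu]; exact c.lab_of h4.1.1.2
    · rw [← hv]; exact c.lab_of h4.1.2.2
  have h2 := (card_le_card h1).trans card_image_le
  have h3 : PP G X X ⊆ PP G univ univ := by
    intro x hx
    simp only [PP, mem_filter, mem_product, mem_univ, true_and] at hx ⊢
    exact hx.2
  have h4 := card_sdiff_add_card_eq_card h3
  have h5 := le_card_sdiff (QL G k d π) (Q G π)
  rw [card_PP, card_PP] at h4
  omega

lemma pos_p [Nonempty V] : (1 : ℝ) ≤ (Cen k π).card := by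
  by_contra hcon
  have hp : (Cen k π).card = 0 := by
    by_contra h
    apply hcon
    exact_mod_cast Nat.one_le_iff_ne_zero.2 h
  have hC : (Cov k π) = ∅ := by
    rw [← card_eq_zero, card_Cov, hp, mul_zero]
  have kr := c.kr
  have d0 := c.d0
  have hK := c.bKf
  rw [hp] at hK
  have hK0 : Kset G k d π = ∅ := by
    rw [← card_eq_zero]
    have h1 : (k : ℝ) * (Kset G k d π).card ≤ 0 := by simpa using hK
    have h2 : ((Kset G k d π).card : ℝ) ≤ 0 := by
      by_contra h; push Not at h
      have := mul_pos (show (0 : ℝ) < k by linarith) h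
      linarith
    have h3 : (0 : ℝ) ≤ ((Kset G k d π).card : ℝ) := Nat.cast_nonneg _
    exact_mod_cast le_antisymm h2 h3
  have hR : R0 G k d π = univ := by
    rw [Kset, hC, sdiff_empty, sdiff_eq_empty_iff_subset] at hK0
    exact subset_antisymm (subset_univ _) hK0
  have h1 : (ee G (univ : Finset V) univ : ℝ) ≤ (4 * d / k) * (univ : Finset V).card := by
    apply mass_le
    intro u _
    have := c.step1 (x := u) (by rw [hR]; simp)
    rw [hR] at this
    exact this.le
  have h2 := c.hbig
  rw [card_univ] at h1
  have h3 : (0 : ℝ) < Fintype.card V := by exact_mod_cast Fintype.card_pos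
  have h4 := c.dkd
  have e : 4 * d / k = 4 * (d / k) := by ring
  have h5 : 2 * d ≤ 4 * d / k := by
    have : (2 * d) * Fintype.card V ≤ (4 * d / k) * Fintype.card V := h2.trans h1
    exact le_of_mul_le_mul_right this h3
  linarith

lemma final [Nonempty V] : 2 * ((k - 30) * d * (Lab G k d π).card) ≤ (QL G k d π).card := by
  have kr := c.kr
  have d0 := c.d0
  have hk2 : 2 ≤ k := by have := c.hk; omega
  have p1 := c.pos_p
  have hT := c.bT
  have hS := c.bS
  have hK := c.bKf
  have hq : ((Q G π).card : ℝ) + ee G (univ \ R0 G k d π) (univ \ R0 G k d π) ≤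
    (QL G k d π).card + ee G univ univ := by exact_mod_cast c.QL_bound
  have covc := c.covc
  -- maximality against the identity
  have hmax : (ee G univ univ : ℝ) ≤ (Q G π).card + 28 * d * (Cen k π).card := by
    have h1 := c.max id (valid_id hk2)
    have h2 : ((ee G univ univ : ℕ) : ℝ) ≤ (Q G (id : V → V)).card := by exact_mod_cast Q_id
    unfold wt at h1
    have h3 : ((filter Big (Cov k π)).card : ℝ) ≤ k * (Cen k π).card := by
      rw [← covc]; exact_mod_cast card_filter_le _ _
    have h4 : 2 * (d / k) * ((filter Big (Cov k π)).card : ℝ) ≤ 2 * (d / k) * (k * (Cen k π).card) := by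
      gcongr
    have h5 : 2 * (d / k) * (k * ((Cen k π).card : ℝ)) = 2 * d * (Cen k π).card := by field_simp
    have h6 : (0 : ℝ) ≤ 26 * d * (Cen k (id : V → V)).card := by positivity
    have h7 : (0 : ℝ) ≤ 2 * (d / k) * (filter Big (Cov k (id : V → V))).card := by positivity
    linarith
  set R := R0 G k d π with hR
  set T := Tset G k d π with hTd
  set K := Kset G k d π with hKd
  set C := Cov k π with hCd
  have hTC : T ⊆ C := filter_subset _ _
  have hCR : Disjoint C R := disjoint_left.2 fun u hu h => (mem_R0.1 h).1 hu
  have hKC : Disjoint C K := disjoint_left.2 fun u hu h => by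
    simp only [hKd, Kset, mem_sdiff] at h
    exact h.1.2 hu
  have hKR : Disjoint K R := disjoint_left.2 fun u hu h => by
    simp only [hKd, Kset, mem_sdiff] at hu
    exact hu.2 h
  have hX : univ \ R = (C \ T) ∪ (T ∪ K) := by
    ext u
    simp only [mem_sdiff, mem_univ, true_and, mem_union]
    by_cases h1 : u ∈ C
    · have := disjoint_left.1 hCR h1
      tauto
    · by_cases h2 : u ∈ R
      · have := disjoint_right.1 hKR h2
        have h4 : u ∉ T := fun h => h1 (hTC h)
        tauto
      · have : u ∈ K := by simp only [hKd, Kset, mem_sdiff, mem_univ, true_and]; exact ⟨h1, h2⟩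
        tauto
  have hd1 : Disjoint (C \ T) (T ∪ K) := by
    rw [disjoint_union_right]
    exact ⟨sdiff_disjoint, hKC.mono_left sdiff_subset⟩
  have hRX : Disjoint R (univ \ R) := disjoint_sdiff
  have hTK : Disjoint T K := hKC.mono_left hTC
  have hRTK : Disjoint R (T ∪ K) := by
    rw [disjoint_union_right]
    exact ⟨(hCR.mono_left hTC).symm, hKR.symm⟩
  have e1 : ee G univ univ = ee G R R + 2 * ee G R (univ \ R) + ee G (univ \ R) (univ \ R) := by
    have hu : (univ : Finset V) = R ∪ (univ \ R) := by
      rw [union_sdiff_of_subset (subset_univ _)]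
    conv_lhs => rw [hu]
    rw [ee_union_left G _ hRX, ee_union_right G _ hRX, ee_union_right G _ hRX,
      ee_comm G (univ \ R) R]
    ring
  have e2 : ee G R (univ \ R) = ee G R (C \ T) + ee G R (T ∪ K) := by
    rw [hX, ee_union_right G _ hd1]
  have e3 : ee G R R + 2 * ee G R (T ∪ K) ≤ ee G (R ∪ (T ∪ K)) (R ∪ (T ∪ K)) := by
    rw [ee_union_left G _ hRTK, ee_union_right G _ hRTK, ee_union_right G _ hRTK,
      ee_comm G (T ∪ K) R]
    omega
  have hcardT : (T.card : ℝ) ≤ 1.02 * (Cen k π).card := by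
    have h8 : (100 : ℝ) * (Sset G k d π).card ≤ k * (Sset G k d π).card := by gcongr
    linarith
  have hne : R ∪ (T ∪ K) ≠ univ := by
    intro h
    have h1 : C ⊆ T := by
      intro u hu
      have : u ∈ R ∪ (T ∪ K) := by rw [h]; simp
      rw [mem_union, mem_union] at this
      rcases this with h2 | h2 | h2
      · exact absurd h2 (disjoint_left.1 hCR hu)
      · exact h2
      · exact absurd h2 (disjoint_left.1 hKC hu)
    have h2 : (C.card : ℝ) ≤ T.card := by exact_mod_cast card_le_card h1
    rw [covc] at h2
    nlinarith
  have e4 := c.hprop _ hne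
  rw [card_union_of_disjoint hRTK, card_union_of_disjoint hTK] at e4
  have e5 : (ee G R (C \ T) : ℝ) ≤ 4 * d * (Cen k π).card := by
    rw [ee_comm]
    have h1 : (ee G (C \ T) R : ℝ) ≤ (4 * d / k) * (C \ T).card := by
      apply mass_le
      intro u hu
      rw [mem_sdiff, hTd, Tset, mem_filter] at hu
      have := hu.2
      push Not at this
      exact (this hu.1).le
    have h2 : ((C \ T).card : ℝ) ≤ C.card := by exact_mod_cast card_le_card sdiff_subset
    rw [covc] at h2
    calc _ ≤ _ := h1
      _ ≤ (4 * d / k) * (k * (Cen k π).card) := by gcongr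
      _ = _ := by field_simp
  have hn : (Fintype.card V : ℝ) = R.card + C.card + K.card := by
    have h1 : (univ : Finset V) = R ∪ (C ∪ K) := by
      have hu : (univ : Finset V) = R ∪ (univ \ R) := by
        rw [union_sdiff_of_subset (subset_univ _)]
      rw [hu, hX, ← union_assoc (C \ T), sdiff_union_of_subset hTC]
    rw [← card_univ, h1, card_union_of_disjoint, card_union_of_disjoint hKC]
    · push_cast; ring
    · rw [disjoint_union_right]; exact ⟨hCR.symm, hKR.symm⟩
  have hbig := c.hbig
  rw [hn, covc] at hbig
  have hlab : ((Lab G k d π).card : ℝ) ≤ (Cen k π).card + K.card := by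
    exact_mod_cast card_union_le _ _
  have e1' : (ee G univ univ : ℝ) = ee G R R + 2 * (ee G R (C \ T) + ee G R (T ∪ K)) +
      ee G (univ \ R) (univ \ R) := by rw [e1, e2]; push_cast; ring
  have e3' : (ee G R R : ℝ) + 2 * ee G R (T ∪ K) ≤ ee G (R ∪ (T ∪ K)) (R ∪ (T ∪ K)) := by
    exact_mod_cast e3
  push_cast at e4
  set p : ℝ := ((Cen k π).card : ℝ)
  have hTd2 : 2 * d * T.card ≤ 2 * d * (1.02 * p) := by gcongr
  have main : 2 * d * (p * (k - 19.5)) ≤ (QL G k d π).card := by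
    have : 0 ≤ d * p := by positivity
    nlinarith
  refine le_trans ?_ main
  have h9 : (k - 30) * ((Lab G k d π).card : ℝ) ≤ p * (k - 19.5) := by
    calc (k - 30) * ((Lab G k d π).card : ℝ) ≤ (k - 30) * (p + K.card) := by
          gcongr; linarith
      _ ≤ p * (k - 19.5) := by
          have : (0 : ℝ) ≤ K.card := Nat.cast_nonneg _
          nlinarith
  have h10 : d * ((k - 30) * ((Lab G k d π).card : ℝ)) ≤ d * (p * (k - 19.5)) := by gcongr
  linarith

lemma lab_self {u : V} (hu : u ∈ Lab G k d π) : π u = u := by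
  have hk2 : 2 ≤ k := by have := c.hk; omega
  rw [Lab, mem_union] at hu
  rcases hu with h | h
  · exact c.val.cen_self hk2 h
  · simp only [Kset, mem_sdiff] at h
    exact (c.val.sing h.1.2).1

lemma fib_card {u : V} (hu : u ∈ Lab G k d π) : (fib π u).card ≤ k := by
  have := (c.val u).2.1
  rw [c.lab_self hu] at this
  have := c.hk
  omega

lemma fib_conn {u : V} (hu : u ∈ Lab G k d π) :
    (G.induce ((fib π u : Finset V) : Set V)).Connected := by
  have huu := c.lab_self hu
  have hmem : u ∈ ((fib π u : Finset V) : Set V) := by simp [mem_fib, huu]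
  rw [SimpleGraph.connected_iff_exists_forall_reachable]
  refine ⟨⟨u, hmem⟩, ?_⟩
  rintro ⟨v, hv⟩
  have hv' : π v = u := by simpa [mem_fib] using hv
  have h1 : ∀ (w : V) (hw : w ∈ ((fib π u : Finset V) : Set V)), G.Adj w u →
      (G.induce ((fib π u : Finset V) : Set V)).Reachable ⟨u, hmem⟩ ⟨w, hw⟩ := by
    intro w hw ha
    apply SimpleGraph.Adj.reachable
    simpa using ha.symm
  have := (c.val v).2.2
  rw [hv'] at this
  rcases this with h | h | ⟨_, w, hw, h2, h3⟩
  · subst h; exact SimpleGraph.Reachable.refl _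
  · exact h1 v hv h
  · have hw' : w ∈ ((fib π u : Finset V) : Set V) := by simp [mem_fib, hw]
    refine (h1 w hw' h2).trans ?_
    apply SimpleGraph.Adj.reachable
    simpa using h3

end Ctx
end
end DSM
namespace DSM
open scoped Classical
open Finset
set_option linter.unusedSectionVars false
set_option linter.unusedVariables false
set_option linter.unusedSimpArgs false

noncomputable section

variable {V : Type} [Fintype V] {G : SimpleGraph V}
variable {k : ℕ} {d : ℝ}

lemma two_edges (G : SimpleGraph V) : 2 * Nat.card G.edgeSet = ee G univ univ := by
  rw [Nat.card_eq_fintype_card, ← SimpleGraph.edgeFinset_card,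
    ← SimpleGraph.sum_degrees_eq_twice_card_edges]
  unfold ee dg
  apply sum_congr rfl
  intro v _
  rw [← SimpleGraph.card_neighborFinset_eq_degree]
  congr 1
  ext w; simp

lemma ee_comap {W : Type} [Fintype W] (f : W ↪ V) (A B : Finset W) :
    ee (G.comap f) A B = ee G (A.map f) (B.map f) := by
  unfold ee dg
  rw [sum_map]
  apply sum_congr rfl
  intro u _
  rw [filter_map, card_map]
  rfl

lemma subgraph_edges (U : Finset V) :
    2 * Nat.card ((⊤ : G.Subgraph).induce (U : Set V)).edgeSet = ee G U U := by
  have h1 : ((⊤ : G.Subgraph).induce (U : Set V)).edgeSet =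
    ((⊤ : G.Subgraph).induce (U : Set V)).spanningCoe.edgeSet := rfl
  rw [h1, two_edges, ← card_PP, ← card_PP]
  congr 1
  ext ⟨u, v⟩
  simp [PP, SimpleGraph.Subgraph.induce_adj]
  tauto

theorem core [Nonempty V] (hk : 100 ≤ k) (hd : (k : ℝ) ^ 2 ≤ d)
    (hsmall : ∀ U : Finset V, (U.card : ℝ) ≤ 12 * k ^ 3 * d →
      (ee G U U : ℝ) ≤ U.card * (d / (12 * k ^ 5)))
    (hbig : 2 * d * Fintype.card V ≤ ee G univ univ)
    (hprop : ∀ U : Finset V, U ≠ univ → (ee G U U : ℝ) ≤ 2 * d * U.card)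
    (hub : ∀ U : Finset V, (ee G U U : ℝ) ≤ 4 * d * U.card) :
    ∃ (W : Type) (_ : Finite W) (G' : SimpleGraph W), G.HasBoundedMinor k G' ∧
      ((k : ℝ) - 30) * d ≤ G'.density := by
  set Big : V → Prop := fun v => 10 * k * d ≤ (dg G v univ : ℝ) with hBig
  obtain ⟨π, hπ, hmax⟩ := exists_max_image (univ.filter fun π : V → V => Valid G k Big π)
    (wt G k d Big) ⟨id, by simp [valid_id (G := G) (Big := Big) (show 2 ≤ k by omega)]⟩
  have c : Ctx G k d Big π :=
    { hk := hk, hd := hd, hsmall := hsmall, hbig := hbig, hprop := hprop, hub := hub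
      hBig := fun v => Iff.rfl
      val := (mem_filter.1 hπ).2
      max := fun ρ hρ => hmax ρ (by simp [hρ]) }
  have hfin := c.final
  set L := Lab G k d π with hL
  have hLpos : (0 : ℝ) < L.card := by
    have h1 := c.pos_p
    have h2 : ((Cen k π).card : ℝ) ≤ L.card := by exact_mod_cast card_le_card subset_union_left
    linarith
  let G' : SimpleGraph {x // x ∈ L} :=
    { Adj := fun a b => (a.1, b.1) ∈ Q G π
      symm := ⟨fun a b h => Q_symm G h⟩
      loopless := ⟨fun a h => ((mem_Q G).1 h).1 rfl⟩ }
  refine ⟨{x // x ∈ L}, inferInstance, G', ⟨fun a => ((fib π a.1 : Finset V) : Set V), ⟨?_, ?_, ?_⟩, ?_⟩, ?_⟩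
  · intro a b hab
    rw [Set.disjoint_left]
    intro u hu hu'
    simp only [mem_coe, mem_fib] at hu hu'
    exact hab (Subtype.ext (hu.symm.trans hu'))
  · intro a
    exact c.fib_conn a.2
  · intro a b hab
    have h : (a.1, b.1) ∈ Q G π := hab
    rw [mem_Q] at h
    obtain ⟨_, u, v, hu, hv, huv⟩ := h
    exact ⟨u, by simp [mem_fib, hu], v, by simp [mem_fib, hv], huv⟩
  · intro a
    have := c.fib_card a.2
    simpa using this
  · have hq : (QL G k d π).card ≤ ee G' univ univ := by
      rw [← card_PP]
      calc _ ≤ ((PP G' univ univ).image (fun x => (x.1.1, x.2.1))).card := by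
            apply card_le_card
            rintro ⟨A, B⟩ h
            simp only [QL, mem_filter] at h
            rw [mem_image]
            refine ⟨(⟨A, h.2.1⟩, ⟨B, h.2.2⟩), ?_, rfl⟩
            simp only [PP, mem_filter, mem_product, mem_univ, true_and]
            exact h.1
        _ ≤ _ := card_image_le
    rw [← two_edges] at hq
    have hq' : ((QL G k d π).card : ℝ) ≤ 2 * Nat.card G'.edgeSet := by exact_mod_cast hq
    unfold SimpleGraph.density
    have hc : (Nat.card {x // x ∈ L} : ℝ) = L.card := by simp
    rw [hc, le_div_iff₀ hLpos]
    linarith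

lemma ee_erase (v : V) : ee G univ univ ≤ ee G (univ.erase v) (univ.erase v) + 2 * dg G v univ := by
  have hd : Disjoint {v} (univ.erase v) := by simp
  have hu : (univ : Finset V) = {v} ∪ univ.erase v := by
    ext u; simp [em]
  have h1 : ee G univ univ = ee G {v} univ + ee G (univ.erase v) univ := by
    conv_lhs => rw [hu]
    rw [ee_union_left G _ hd, ← hu]
  have h2 : ee G (univ.erase v) univ = ee G (univ.erase v) {v} + ee G (univ.erase v) (univ.erase v) := by
    have := ee_union_right G (univ.erase v) hd
    rwa [← hu] at this
  have h3 : ee G {v} univ = dg G v univ := by simp [ee]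
  have h4 : ee G (univ.erase v) {v} ≤ dg G v univ := by
    rw [ee_comm, ← h3]; exact ee_mono G subset_rfl (subset_univ _)
  omega

lemma get_hub [Nonempty V] (hd : 3 ≤ d)
    (hbig : 2 * d * Fintype.card V ≤ ee G univ univ)
    (hprop : ∀ U : Finset V, U ≠ univ → (ee G U U : ℝ) ≤ 2 * d * U.card) :
    ∀ U : Finset V, (ee G U U : ℝ) ≤ 4 * d * U.card := by
  intro U
  by_cases hU : U = univ
  · subst hU
    obtain ⟨v, _, hv⟩ := exists_min_image (univ : Finset V) (fun v => dg G v univ) univ_nonempty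
    have h1 : (dg G v univ : ℝ) * (univ : Finset V).card ≤ ee G univ univ :=
      mass fun u hu => by exact_mod_cast hv u hu
    have h2 : (ee G univ univ : ℝ) ≤ ee G (univ.erase v) (univ.erase v) + 2 * dg G v univ := by
      exact_mod_cast ee_erase v
    have h3 := hprop (univ.erase v) (by intro h; have := mem_univ v; rw [← h] at this; simp at this)
    have h4 : (((univ : Finset V).erase v).card : ℝ) ≤ (univ : Finset V).card := by
      exact_mod_cast card_le_card (subset_univ _)
    have h5 : (ee G univ univ : ℝ) ≤ (univ : Finset V).card * (univ : Finset V).card := by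
      apply mass_le
      intro u _
      exact_mod_cast dg_le_card G u univ
    rw [← card_univ] at hbig
    set n : ℝ := ((univ : Finset V).card : ℝ)
    have n0 : 0 < n := by
      have : 0 < (univ : Finset V).card := card_pos.2 univ_nonempty
      exact Nat.cast_pos.2 this
    have n1 : 2 * d ≤ n := le_of_mul_le_mul_right (hbig.trans h5) n0
    have e0 : (0 : ℝ) ≤ dg G v univ := Nat.cast_nonneg _
    have h6 : 2 * d * (((univ : Finset V).erase v).card : ℝ) ≤ 2 * d * n := by gcongr
    have h7 : 4 * (dg G v univ : ℝ) ≤ ee G univ univ := by nlinarith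
    linarith
  · have := hprop U hU
    have : (0 : ℝ) ≤ d * U.card := by positivity
    linarith

lemma transfer {W : Type} {G' : SimpleGraph W} (S : Finset V)
    (h : (G.comap (Function.Embedding.subtype (· ∈ S))).HasBoundedMinor k G') :
    G.HasBoundedMinor k G' := by
  obtain ⟨X, ⟨h1, h2, h3⟩, h4⟩ := h
  refine ⟨fun i => Subtype.val '' X i, ⟨?_, ?_, ?_⟩, ?_⟩
  · intro i j hij
    exact (Set.disjoint_image_iff Subtype.val_injective).2 (h1 hij)
  · intro i
    let f : ((G.comap (Function.Embedding.subtype (· ∈ S))).induce (X i)) →g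
        (G.induce (Subtype.val '' X i)) :=
      { toFun := fun x => ⟨x.1.1, x.1, x.2, rfl⟩
        map_rel' := by
          intro a b hab
          exact hab }
    refine (h2 i).map f ?_
    rintro ⟨_, x, hx, rfl⟩
    exact ⟨⟨x, hx⟩, rfl⟩
  · intro i j hij
    obtain ⟨u, hu, v, hv, huv⟩ := h3 i j hij
    exact ⟨u.1, ⟨u, hu, rfl⟩, v.1, ⟨v, hv, rfl⟩, huv⟩
  · intro i
    rw [Nat.card_image_of_injective Subtype.val_injective]
    exact h4 i

theorem main (hk : 100 ≤ k) (G : SimpleGraph V) (hd : (k : ℝ) ^ 2 ≤ G.density)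
    (hno : ¬ ∃ H : G.Subgraph, (Nat.card H.verts : ℝ) ≤ 12 * k ^ 3 * G.density ∧
        G.density / (24 * k ^ 5) ≤ H.density) :
    ∃ (W : Type) (_ : Finite W) (G' : SimpleGraph W), G.HasBoundedMinor k G' ∧
      ((k : ℝ) - 30) * G.density ≤ G'.density := by
  set d := G.density with hdd
  have kr : (100 : ℝ) ≤ k := by exact_mod_cast hk
  have d3 : 3 ≤ d := by nlinarith
  have hsmall : ∀ U : Finset V, (U.card : ℝ) ≤ 12 * k ^ 3 * d →
      (ee G U U : ℝ) ≤ U.card * (d / (12 * k ^ 5)) := by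
    intro U hU
    by_contra hcon
    push Not at hcon
    apply hno
    refine ⟨(⊤ : G.Subgraph).induce (U : Set V), ?_, ?_⟩
    · simpa using hU
    · unfold SimpleGraph.Subgraph.density
      have e1 := subgraph_edges (G := G) U
      have e2 : 2 * (Nat.card ((⊤ : G.Subgraph).induce (U : Set V)).edgeSet : ℝ) = ee G U U := by
        exact_mod_cast e1
      have hUpos : (0 : ℝ) < U.card := by
        rcases U.eq_empty_or_nonempty with h | h
        · subst h; simp [ee] at hcon
        · exact_mod_cast card_pos.2 h
      have e3 : (Nat.card ((⊤ : G.Subgraph).induce (U : Set V)).verts : ℝ) = U.card := by simp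
      rw [e3, le_div_iff₀ hUpos]
      have e4 : d / (24 * (k : ℝ) ^ 5) = d / (12 * k ^ 5) / 2 := by
        rw [div_div]; congr 1; ring
      rw [e4]
      linarith
  have hVpos : 0 < Fintype.card V := by
    by_contra h
    have h0 : Nat.card V = 0 := by rw [Nat.card_eq_fintype_card]; omega
    have : d = 0 := by rw [hdd, SimpleGraph.density, h0]; simp
    linarith
  have hVne : Nonempty V := Fintype.card_pos_iff.1 hVpos
  have hV : 2 * d * (univ : Finset V).card ≤ ee G univ univ := by
    have e1 : 2 * (Nat.card G.edgeSet : ℝ) = ee G univ univ := by exact_mod_cast two_edges G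
    have hv' : (Fintype.card V : ℝ) ≠ 0 := by exact_mod_cast hVpos.ne'
    have e2 : d * Fintype.card V = Nat.card G.edgeSet := by
      rw [hdd, SimpleGraph.density, Nat.card_eq_fintype_card (α := V)]
      field_simp
    rw [card_univ, ← e1, ← e2]
    linarith
  obtain ⟨S, hS, hmin⟩ := exists_min_image
    (univ.filter fun S : Finset V => S.Nonempty ∧ 2 * d * S.card ≤ (ee G S S : ℝ))
    Finset.card ⟨univ, by simp only [mem_filter, mem_univ, true_and]; exact ⟨univ_nonempty, hV⟩⟩
  simp only [mem_filter, mem_univ, true_and] at hS hmin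
  obtain ⟨hSne, hSd⟩ := hS
  set f := Function.Embedding.subtype (fun x => x ∈ S) with hf
  have hmapu : (univ : Finset {x // x ∈ S}).map f = S := by
    ext x; simp [hf]
  have hne : Nonempty {x // x ∈ S} := ⟨⟨hSne.choose, hSne.choose_spec⟩⟩
  have hbig1 : 2 * d * Fintype.card {x // x ∈ S} ≤ ee (G.comap f) univ univ := by
    rw [ee_comap, hmapu, Fintype.card_coe]; exact hSd
  have hprop1 : ∀ U : Finset {x // x ∈ S}, U ≠ univ →
      (ee (G.comap f) U U : ℝ) ≤ 2 * d * U.card := by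
    intro U hU
    by_contra hcon
    push Not at hcon
    rw [ee_comap] at hcon
    have h1 := hmin (U.map f) ⟨?_, by rw [card_map]; exact hcon.le⟩
    · rw [card_map, ← Fintype.card_coe S] at h1
      exact hU ((card_eq_iff_eq_univ U).1 (le_antisymm (card_le_univ U) h1))
    · rw [map_nonempty]
      by_contra h
      rw [not_nonempty_iff_eq_empty] at h
      subst h
      simp [ee] at hcon
  obtain ⟨W, hW, G', hm, hden⟩ := core (G := G.comap f) hk hd
    (by
      intro U hU
      rw [ee_comap, ← card_map f]
      rw [← card_map f] at hU
      exact hsmall _ hU)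
    hbig1 hprop1 (get_hub d3 hbig1 hprop1)
  exact ⟨W, hW, G', transfer S hm, hden⟩

end
end DSM
/-- Let `k ≥ 100` be an integer and `G` a graph with density `d = d(G) ≥ k²`. Then `G`
contains (i) a subgraph `H` with `v(H) ≤ 12k³d` and `d(H) ≥ d/(24k⁵)`, or (ii) an
`m`-bounded minor `G'` with `d(G') ≥ m(1 − 30/m)d` for some integer `m ∈ [k/6, k]`. -/
theorem dense_subgraph_or_bounded_minor (k : ℕ) (hk : 100 ≤ k)
    (V : Type) [Fintype V] (G : SimpleGraph V) (hd : (k : ℝ) ^ 2 ≤ G.density) :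
    (∃ H : G.Subgraph, (Nat.card H.verts : ℝ) ≤ 12 * k ^ 3 * G.density ∧
        G.density / (24 * k ^ 5) ≤ H.density) ∨
    (∃ m : ℕ, (k : ℝ) / 6 ≤ (m : ℝ) ∧ m ≤ k ∧
        ∃ (W : Type) (_ : Finite W) (G' : SimpleGraph W), G.HasBoundedMinor m G' ∧
          (m : ℝ) * (1 - 30 / m) * G.density ≤ G'.density) := by
  by_cases hno : ∃ H : G.Subgraph, (Nat.card H.verts : ℝ) ≤ 12 * k ^ 3 * G.density ∧
        G.density / (24 * k ^ 5) ≤ H.density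
  · exact Or.inl hno
  · right
    obtain ⟨W, hW, G', hm, hden⟩ := DSM.main hk G hd hno
    have kr : (100 : ℝ) ≤ k := by exact_mod_cast hk
    refine ⟨k, by linarith, le_rfl, W, hW, G', hm, ?_⟩
    have e : (k : ℝ) * (1 - 30 / k) * G.density = ((k : ℝ) - 30) * G.density := by
      field_simp
    rw [e]; exact hden
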